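/- arXiv:1610.09833 — 8 statements merged into one kernel-verified Lean document; each statement's English description precedes it below -/
import Mathlib

section
/- Let 0 < ε < π. For every even continuous function g on [−ε,ε], the function A(g) is even and continuous on [−ε,ε], the assignment g ↦ A(g) is linear, and for every ρ ∈ [−ε,ε] one has |A(g)(ρ)| ≤ 2·|ln(cos(|ρ|/2))|·sup_{x∈[−|ρ|,|ρ|]}|g(x)|. In particular, A is a continuous linear map from the space of even continuous functions on [−ε,ε] (with the sup norm) to itself. -/
open Real Set

/-- The operator `A`: `A(g)(ρ) = -∫₀^ρ (1/sin s) ∫₀^s sin(x) g(x) dx ds`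
(the value at `ρ = 0` is automatically `0`). -/
noncomputable def Aop (g : ℝ → ℝ) (ρ : ℝ) : ℝ :=
  -∫ s in (0:ℝ)..ρ, (Real.sin s)⁻¹ * ∫ x in (0:ℝ)..s, Real.sin x * g x

noncomputable def hAux (g : ℝ → ℝ) (s : ℝ) : ℝ :=
  (Real.sin s)⁻¹ * ∫ x in (0:ℝ)..s, Real.sin x * g x

lemma hAux_odd (g : ℝ → ℝ) (hge : ∀ x, g (-x) = g x) (s : ℝ) : hAux g (-s) = - hAux g s := by
  have h : ∫ x in (0:ℝ)..(-s), Real.sin x * g x = ∫ x in (0:ℝ)..s, Real.sin x * g x := by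
    have h1 := intervalIntegral.integral_comp_neg (a := 0) (b := s) (fun x => Real.sin x * g x)
    simp only [Real.sin_neg, hge, neg_zero, neg_mul, intervalIntegral.integral_neg] at h1
    rw [intervalIntegral.integral_symm, ← h1, neg_neg]
  unfold hAux
  rw [h, Real.sin_neg, inv_neg, neg_mul]

lemma Aop_eq (g : ℝ → ℝ) (ρ : ℝ) : Aop g ρ = -∫ s in (0:ℝ)..ρ, hAux g s := rfl

lemma Aop_even (g : ℝ → ℝ) (hge : ∀ x, g (-x) = g x) (ρ : ℝ) : Aop g (-ρ) = Aop g ρ := by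
  rw [Aop_eq, Aop_eq]
  have h1 := intervalIntegral.integral_comp_neg (a := 0) (b := ρ) (hAux g)
  simp only [hAux_odd g hge, neg_zero, intervalIntegral.integral_neg] at h1
  rw [intervalIntegral.integral_symm, ← h1, neg_neg]

lemma hAux_bound (g : ℝ → ℝ) (M s : ℝ) (hs : 0 ≤ s) (hsπ : s < π)
    (hM : ∀ x ∈ Icc 0 s, |g x| ≤ M) : |hAux g s| ≤ M * Real.tan (s / 2) := by
  rcases hs.eq_or_lt with rfl | hs0
  · simp [hAux]
  have hsin : 0 < Real.sin s := Real.sin_pos_of_pos_of_lt_pi hs0 hsπ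
  have hcos : 0 < Real.cos (s / 2) := Real.cos_pos_of_mem_Ioo ⟨by linarith, by linarith⟩
  have hsin2 : 0 < Real.sin (s / 2) := Real.sin_pos_of_pos_of_lt_pi (by linarith) (by linarith)
  have hb : |∫ x in (0:ℝ)..s, Real.sin x * g x| ≤ ∫ x in (0:ℝ)..s, M * Real.sin x := by
    rw [← Real.norm_eq_abs]
    refine intervalIntegral.norm_integral_le_of_norm_le hs ?_ ?_
    · refine Filter.Eventually.of_forall fun x hx => ?_
      have h0 : 0 ≤ Real.sin x := Real.sin_nonneg_of_nonneg_of_le_pi hx.1.le (by linarith [hx.2])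
      rw [Real.norm_eq_abs, abs_mul, abs_of_nonneg h0, mul_comm]
      exact mul_le_mul_of_nonneg_right (hM x ⟨hx.1.le, hx.2⟩) h0
    · exact (by fun_prop : Continuous fun x => M * Real.sin x).intervalIntegrable _ _
  rw [intervalIntegral.integral_const_mul, integral_sin, Real.cos_zero] at hb
  unfold hAux
  rw [abs_mul, abs_of_pos (inv_pos.2 hsin)]
  calc _ ≤ (Real.sin s)⁻¹ * (M * (1 - Real.cos s)) := by gcongr
    _ = M * Real.tan (s / 2) := by
      have e1 : Real.sin s = 2 * Real.sin (s/2) * Real.cos (s/2) := by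
        rw [← Real.sin_two_mul]; ring_nf
      have e2 : Real.cos s = 1 - 2 * Real.sin (s/2) ^ 2 := by
        have := Real.cos_two_mul (s/2)
        rw [show 2 * (s/2) = s by ring] at this
        nlinarith [Real.sin_sq_add_cos_sq (s/2)]
      rw [e1, e2, Real.tan_eq_sin_div_cos]
      field_simp
      ring

lemma inner_int (ε : ℝ) (hε : 0 < ε) (g : ℝ → ℝ) (hg : ContinuousOn g (Icc (-ε) ε)) (a b : ℝ)
    (ha : a ∈ Icc (-ε) ε) (hb : b ∈ Icc (-ε) ε) :
    IntervalIntegrable (fun x => Real.sin x * g x) MeasureTheory.volume a b := by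
  apply ContinuousOn.intervalIntegrable
  exact (Real.continuous_sin.continuousOn.mul hg).mono (uIcc_subset_Icc ha hb)

lemma hAux_cont (ε : ℝ) (hε : 0 < ε) (hεπ : ε < Real.pi)
    (g : ℝ → ℝ) (hg : ContinuousOn g (Icc (-ε) ε)) (hge : ∀ x, g (-x) = g x) :
    ContinuousOn (hAux g) (Icc (-ε) ε) := by
  intro s hs
  rcases eq_or_ne s 0 with rfl | hs0
  · obtain ⟨M, hM⟩ := isCompact_Icc.exists_bound_of_continuousOn hg
    have hb : ∀ s ∈ Icc (-ε) ε, |hAux g s| ≤ M * Real.tan (|s| / 2) := by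
      intro s hs
      have h1 := hAux_bound g M |s| (abs_nonneg s) (by linarith [abs_le.2 hs])
        (fun x hx => hM x ⟨by linarith [hx.1], by linarith [hx.2, abs_le.2 hs]⟩)
      rcases abs_choice s with h | h <;> rw [h] at h1 ⊢
      · exact h1
      · rwa [hAux_odd g hge, abs_neg] at h1
    have h0 : hAux g 0 = 0 := by simp [hAux]
    unfold ContinuousWithinAt
    rw [h0]
    refine squeeze_zero_norm' (a := fun s => M * Real.tan (|s| / 2)) ?_ ?_
    · filter_upwards [self_mem_nhdsWithin] with x hx using hb x hx
    · have : ContinuousAt (fun s : ℝ => M * Real.tan (|s| / 2)) 0 := by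
        refine continuousAt_const.mul ?_
        refine ContinuousAt.comp (g := Real.tan) (f := fun s : ℝ => |s| / 2) ?_ (by fun_prop)
        exact Real.continuousAt_tan.2 (by simp)
      have h2 := this.tendsto
      simp at h2
      exact h2.mono_left nhdsWithin_le_nhds
  · have hsin : Real.sin s ≠ 0 := by
      intro h
      rw [Real.sin_eq_zero_iff_of_lt_of_lt (by linarith [hs.1]) (by linarith [hs.2])] at h
      exact hs0 h
    refine (Real.continuous_sin.continuousWithinAt.inv₀ hsin).mul ?_
    have h := intervalIntegral.continuousOn_primitive_interval' (a := 0)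
      (inner_int ε hε g hg (-ε) ε ⟨le_rfl, by linarith⟩ ⟨by linarith, le_rfl⟩)
      (by rw [uIcc_of_le (by linarith)]; exact ⟨by linarith, hε.le⟩)
    rw [uIcc_of_le (by linarith)] at h
    exact h s hs

lemma hAux_int (ε : ℝ) (hε : 0 < ε) (hεπ : ε < Real.pi)
    (g : ℝ → ℝ) (hg : ContinuousOn g (Icc (-ε) ε)) (hge : ∀ x, g (-x) = g x) (a b : ℝ)
    (ha : a ∈ Icc (-ε) ε) (hb : b ∈ Icc (-ε) ε) :
    IntervalIntegrable (hAux g) MeasureTheory.volume a b :=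
  ((hAux_cont ε hε hεπ g hg hge).mono (uIcc_subset_Icc ha hb)).intervalIntegrable

lemma tan_hasDeriv (x : ℝ) (h : 0 < Real.cos (x / 2)) :
    HasDerivAt (fun s => -2 * Real.log (Real.cos (s / 2))) (Real.tan (x / 2)) x := by
  have h1 : HasDerivAt (fun s : ℝ => s / 2) (1 / 2) x := (hasDerivAt_id x).div_const 2
  have h2 := ((h1.cos).log h.ne').const_mul (-2)
  have e : Real.tan (x / 2) = -2 * (-Real.sin (x / 2) * (1 / 2) / Real.cos (x / 2)) := by
    rw [Real.tan_eq_sin_div_cos]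
    ring
  rw [e]
  exact h2

lemma Aop_bound (g : ℝ → ℝ) (M ρ : ℝ) (hρ : 0 ≤ ρ) (hρπ : ρ < π)
    (hM : ∀ x ∈ Icc 0 ρ, |g x| ≤ M) :
    |Aop g ρ| ≤ 2 * |Real.log (Real.cos (ρ / 2))| * M := by
  have hc : ∀ x ∈ uIcc 0 ρ, 0 < Real.cos (x / 2) := by
    intro x hx
    rw [uIcc_of_le hρ] at hx
    exact Real.cos_pos_of_mem_Ioo ⟨by linarith [hx.1, Real.pi_pos], by linarith [hx.2]⟩
  have hti : IntervalIntegrable (fun s => Real.tan (s / 2)) MeasureTheory.volume 0 ρ := by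
    apply ContinuousOn.intervalIntegrable
    intro x hx
    refine ContinuousAt.continuousWithinAt ?_
    exact ContinuousAt.comp (g := Real.tan) (f := fun s : ℝ => s / 2)
      (Real.continuousAt_tan.2 (hc x hx).ne') (by fun_prop)
  have hI : ∫ s in (0:ℝ)..ρ, Real.tan (s / 2) = -2 * Real.log (Real.cos (ρ / 2)) := by
    rw [intervalIntegral.integral_eq_sub_of_hasDerivAt (fun x hx => tan_hasDeriv x (hc x hx)) hti]
    simp
  have hl : Real.log (Real.cos (ρ / 2)) ≤ 0 :=
    Real.log_nonpos (hc ρ right_mem_uIcc).le (Real.cos_le_one _)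
  rw [Aop_eq, abs_neg, ← Real.norm_eq_abs]
  have := intervalIntegral.norm_integral_le_of_norm_le (f := hAux g)
    (g := fun s => M * Real.tan (s / 2)) (μ := MeasureTheory.volume) hρ
    (Filter.Eventually.of_forall fun s hs => hAux_bound g M s hs.1.le (by linarith [hs.2])
      (fun x hx => hM x ⟨hx.1, hx.2.trans hs.2⟩)) (hti.const_mul M)
  rw [intervalIntegral.integral_const_mul, hI] at this
  rw [abs_of_nonpos hl]
  linarith

theorem stmt0 (ε : ℝ) (hε : 0 < ε) (hεπ : ε < Real.pi)
    (g : ℝ → ℝ) (hg : ContinuousOn g (Icc (-ε) ε)) (hge : ∀ x, g (-x) = g x) :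
    (∀ ρ ∈ Icc (-ε) ε, Aop g (-ρ) = Aop g ρ) ∧
    ContinuousOn (Aop g) (Icc (-ε) ε) ∧
    (∀ g₂ : ℝ → ℝ, ContinuousOn g₂ (Icc (-ε) ε) → (∀ x, g₂ (-x) = g₂ x) →
      ∀ ρ ∈ Icc (-ε) ε, Aop (fun x => g x + g₂ x) ρ = Aop g ρ + Aop g₂ ρ) ∧
    (∀ c : ℝ, ∀ ρ ∈ Icc (-ε) ε, Aop (fun x => c * g x) ρ = c * Aop g ρ) ∧
    (∀ ρ ∈ Icc (-ε) ε,
      |Aop g ρ| ≤ 2 * |Real.log (Real.cos (|ρ| / 2))| *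
        sSup ((fun x => |g x|) '' Icc (-|ρ|) |ρ|)) := by
  have h0 : (0:ℝ) ∈ Icc (-ε) ε := ⟨by linarith, hε.le⟩
  refine ⟨fun ρ _ => Aop_even g hge ρ, ?_, ?_, ?_, ?_⟩
  · have h := intervalIntegral.continuousOn_primitive_interval' (a := 0)
      (hAux_int ε hε hεπ g hg hge (-ε) ε ⟨le_rfl, by linarith⟩ ⟨by linarith, le_rfl⟩)
      (by rw [uIcc_of_le (by linarith)]; exact h0)
    rw [uIcc_of_le (by linarith)] at h
    exact h.neg
  · intro g₂ hg₂ hge₂ ρ hρ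
    have : ∫ s in (0:ℝ)..ρ, hAux (fun x => g x + g₂ x) s
        = ∫ s in (0:ℝ)..ρ, (hAux g s + hAux g₂ s) := by
      refine intervalIntegral.integral_congr fun s hs => ?_
      have hs' := uIcc_subset_Icc h0 hρ hs
      simp only [hAux, mul_add]
      rw [intervalIntegral.integral_add (inner_int ε hε g hg 0 s h0 hs')
        (inner_int ε hε g₂ hg₂ 0 s h0 hs'), mul_add]
    rw [Aop_eq, Aop_eq, Aop_eq, this, intervalIntegral.integral_add
      (hAux_int ε hε hεπ g hg hge 0 ρ h0 hρ) (hAux_int ε hε hεπ g₂ hg₂ hge₂ 0 ρ h0 hρ)]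
    ring
  · intro c ρ _
    have : ∀ s, hAux (fun x => c * g x) s = c * hAux g s := by
      intro s
      simp only [hAux, mul_left_comm _ c, intervalIntegral.integral_const_mul]
    simp only [Aop_eq, this, intervalIntegral.integral_const_mul, mul_neg]
  · intro ρ hρ
    have hA : Aop g ρ = Aop g |ρ| := by
      rcases abs_choice ρ with h | h <;> rw [h]
      exact (Aop_even g hge ρ).symm
    have hle : |ρ| ≤ ε := abs_le.2 hρ
    rw [hA]
    refine Aop_bound g _ |ρ| (abs_nonneg ρ) (by linarith) fun x hx => ?_
    refine le_csSup ?_ ⟨x, ⟨by linarith [hx.1, abs_nonneg ρ], hx.2⟩, rfl⟩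
    exact (isCompact_Icc.image_of_continuousOn
      (hg.mono (Icc_subset_Icc (by linarith) hle)).abs).bddAbove
end

section
/- Let 0 < ε < π. If g is an even C¹ function on [−ε,ε], then A(g) is C³ on [−ε,ε]; moreover A is continuous as a linear map from the space of even C¹ functions on [−ε,ε] (with the C¹ norm) to the space of even C³ functions on [−ε,ε] (with the C³ norm). -/
open Real Set

open Filter Topology MeasureTheory

namespace AopAux

lemma step {ε : ℝ} (hε : 0 < ε) {h f f' : ℝ → ℝ}
    (hf : ∀ x ∈ Icc (-ε) ε, HasDerivAt f (f' x) x) (heq : ∀ x ∈ Ioo (-ε) ε, h x = f x) :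
    (∀ x ∈ Ioo (-ε) ε, deriv h x = f' x) ∧
    (∀ x ∈ Icc (-ε) ε, deriv h x = f' x ∨ deriv h x = 0) := by
  have key : ∀ x ∈ Icc (-ε) ε, DifferentiableAt ℝ h x → deriv h x = f' x := by
    intro x hx hd
    have hcl : x ∈ closure (Ioo (-ε) ε) := by
      rw [closure_Ioo (by linarith)]; exact hx
    have hne : (𝓝[Ioo (-ε) ε] x).NeBot := mem_closure_iff_nhdsWithin_neBot.mp hcl
    have hxe : h x = f x := by
      have t1 : Tendsto h (𝓝[Ioo (-ε) ε] x) (𝓝 (h x)) := hd.continuousAt.tendsto.mono_left nhdsWithin_le_nhds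
      have t2 : Tendsto f (𝓝[Ioo (-ε) ε] x) (𝓝 (f x)) :=
        (hf x hx).continuousAt.tendsto.mono_left nhdsWithin_le_nhds
      refine tendsto_nhds_unique t1 (t2.congr' ?_)
      filter_upwards [self_mem_nhdsWithin] with y hy using (heq y hy).symm
    have hu : UniqueDiffWithinAt ℝ (Ioo (-ε) ε) x := by
      refine uniqueDiffWithinAt_convex (convex_Ioo _ _) ?_ hcl
      rw [interior_Ioo]; exact nonempty_Ioo.mpr (by linarith)
    have d1 : HasDerivWithinAt h (f' x) (Ioo (-ε) ε) x :=
      (hf x hx).hasDerivWithinAt.congr heq hxe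
    have d2 := hd.hasDerivAt.hasDerivWithinAt (s := Ioo (-ε) ε)
    exact hu.eq_deriv _ d2 d1
  constructor
  · intro x hx
    refine key x (Ioo_subset_Icc_self hx) ?_
    have : h =ᶠ[𝓝 x] f := by
      filter_upwards [isOpen_Ioo.mem_nhds hx] with y hy using heq y hy
    exact this.differentiableAt_iff.mpr (hf x (Ioo_subset_Icc_self hx)).differentiableAt
  · intro x hx
    by_cases hd : DifferentiableAt ℝ h x
    · exact Or.inl (key x hx hd)
    · exact Or.inr (deriv_zero_of_not_differentiableAt hd)

lemma ext {ε : ℝ} (hε : 0 < ε) {g : ℝ → ℝ} (hg : ContDiffOn ℝ 1 g (Icc (-ε) ε))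
    (hev : ∀ x, g (-x) = g x) :
    ∃ G D : ℝ → ℝ, Continuous D ∧ (∀ x, HasDerivAt G (D x) x) ∧ D 0 = 0 ∧
      ∀ x ∈ Icc (-ε) ε, G x = g x := by
  set d := derivWithin g (Icc (-ε) ε) with hd
  have hle : -ε ≤ ε := by linarith
  have hdc : ContinuousOn d (Icc (-ε) ε) :=
    hg.continuousOn_derivWithin (uniqueDiffOn_Icc (by linarith)) le_rfl
  set D : ℝ → ℝ := IccExtend hle ((Icc (-ε) ε).domRestrict d) with hD
  have hDc : Continuous D := (continuousOn_iff_continuous_domRestrict.mp hdc).Icc_extend'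
  have hDd : ∀ x ∈ Icc (-ε) ε, D x = d x := fun x hx => by
    rw [hD, IccExtend_of_mem hle _ hx]; rfl
  have hgd : ∀ x ∈ Ioo (-ε) ε, HasDerivAt g (D x) x := by
    intro x hx
    have hx' := Ioo_subset_Icc_self hx
    rw [hDd x hx']
    exact ((hg.differentiableOn one_ne_zero x hx').hasDerivWithinAt).hasDerivAt (Icc_mem_nhds hx.1 hx.2)
  refine ⟨fun x => g 0 + ∫ t in (0:ℝ)..x, D t, D, hDc, ?_, ?_, ?_⟩
  · intro x
    exact (hDc.integral_hasStrictDerivAt 0 x).hasDerivAt.const_add _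
  · have h0 := hgd 0 ⟨by linarith, hε⟩
    have h1 : deriv g 0 = - deriv g 0 := by
      have := deriv_comp_neg (f := g) (0:ℝ)
      simp only [hev, neg_zero] at this
      exact this
    rw [h0.deriv] at h1
    linarith
  · intro x hx
    have hsub : uIcc 0 x ⊆ Icc (-ε) ε := uIcc_subset_Icc ⟨by linarith, hε.le⟩ hx
    have := intervalIntegral.integral_eq_sub_of_hasDeriv_right (f := g) (f' := D) (a := 0) (b := x)
      (hg.continuousOn.mono hsub) (fun y hy => by
        refine (hgd y ⟨?_, ?_⟩).hasDerivWithinAt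
        · refine lt_of_le_of_lt ?_ hy.1
          exact le_min (by linarith) hx.1
        · refine lt_of_lt_of_le hy.2 ?_
          exact max_le hε.le hx.2) (hDc.intervalIntegrable _ _)
    simp only [this]; ring

noncomputable def J (D : ℝ → ℝ) (s : ℝ) : ℝ := ∫ x in (0:ℝ)..s, (1 - cos x) * D x
noncomputable def K (D : ℝ → ℝ) (s : ℝ) : ℝ := J D s / sin s ^ 3
noncomputable def F0 (G D : ℝ → ℝ) (s : ℝ) : ℝ := sin s / (1 + cos s) * G s - sin s ^ 2 * K D s
noncomputable def F1 (G D : ℝ → ℝ) (s : ℝ) : ℝ := G s / (1 + cos s) + cos s * sin s * K D s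
noncomputable def F2 (G D : ℝ → ℝ) (s : ℝ) : ℝ :=
  sin s / (1 + cos s) ^ 2 * G s + D s - (1 + cos s ^ 2) * K D s

lemma J_deriv {D : ℝ → ℝ} (hD : Continuous D) (s : ℝ) :
    HasDerivAt (J D) ((1 - cos s) * D s) s := by
  have : Continuous fun x => (1 - cos x) * D x := by fun_prop
  exact (this.integral_hasStrictDerivAt 0 s).hasDerivAt

lemma J_bound {D : ℝ → ℝ} {η s : ℝ} (h : ∀ x, |x| ≤ |s| → |D x| ≤ η) :
    |J D s| ≤ η * |s| ^ 3 := by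
  have hη : 0 ≤ η := (abs_nonneg _).trans (h s le_rfl)
  have := intervalIntegral.norm_integral_le_of_norm_le_const (a := 0) (b := s)
    (f := fun x => (1 - cos x) * D x) (C := |s| ^ 2 * η) (by
      intro x hx
      have hxs : |x| ≤ |s| := by
        have := Set.abs_sub_left_of_mem_uIcc (uIoc_subset_uIcc hx)
        simpa using this
      rw [norm_mul, Real.norm_eq_abs, Real.norm_eq_abs]
      refine mul_le_mul ?_ (h x hxs) (abs_nonneg _) (by positivity)
      have h1 := Real.one_sub_sq_div_two_le_cos (x := x)
      have h2 := Real.cos_le_one x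
      rw [abs_of_nonneg (by linarith), sq_abs]
      have := sq_le_sq.mpr hxs
      nlinarith [sq_nonneg x])
  rw [Real.norm_eq_abs, sub_zero] at this
  calc |J D s| ≤ _ := this
    _ = _ := by ring

lemma sin_ne {s : ℝ} (hs : s ∈ Ioo (-π) π) (h0 : s ≠ 0) : sin s ≠ 0 := by
  intro h
  exact h0 ((Real.sin_eq_zero_iff_of_lt_of_lt hs.1 hs.2).mp h)

lemma one_add_cos_pos {s : ℝ} (hs : s ∈ Ioo (-π) π) : 0 < 1 + cos s := by
  have h1 := Real.neg_one_le_cos s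
  rcases h1.lt_or_eq with h | h
  · linarith
  · exfalso
    have h2 := Real.sin_sq_add_cos_sq s
    rw [← h] at h2
    have h3 : sin s = 0 := by nlinarith
    by_cases h0 : s = 0
    · rw [h0] at h; norm_num at h
    · exact sin_ne hs h0 h3

lemma K_bound {D : ℝ → ℝ} {η s B : ℝ} (h : ∀ x, |x| ≤ |s| → |D x| ≤ η)
    (hB : |s| ≤ B * |sin s|) (hB0 : 0 ≤ B) : |K D s| ≤ B ^ 3 * η := by
  have hη : 0 ≤ η := (abs_nonneg _).trans (h s le_rfl)
  rw [K, abs_div, abs_pow]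
  refine div_le_of_le_mul₀ (by positivity) (by positivity) ?_
  calc |J D s| ≤ η * |s| ^ 3 := J_bound h
    _ ≤ η * (B * |sin s|) ^ 3 := by gcongr
    _ = _ := by ring

lemma exists_B {ε : ℝ} (hε : 0 < ε) (hεπ : ε < π) :
    ∃ B : ℝ, 0 ≤ B ∧ ∀ s ∈ Icc (-ε) ε, |s| ≤ B * |sin s| := by
  have hc : ContinuousOn (fun s => (sinc s)⁻¹) (Icc (-ε) ε) := by
    refine Real.continuous_sinc.continuousOn.inv₀ ?_
    intro s hs
    by_cases h0 : s = 0
    · simp [h0]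
    · rw [Real.sinc_of_ne_zero h0]
      exact div_ne_zero (sin_ne ⟨by linarith [hs.1], by linarith [hs.2]⟩ h0) h0
  obtain ⟨B, hB⟩ := isCompact_Icc.exists_bound_of_continuousOn hc
  refine ⟨B, (norm_nonneg _).trans (hB 0 ⟨by linarith, hε.le⟩), fun s hs => ?_⟩
  by_cases h0 : s = 0
  · simp [h0]
  have := hB s hs
  have hs0 := sin_ne ⟨by linarith [hs.1], by linarith [hs.2]⟩ h0
  rw [Real.sinc_of_ne_zero h0, inv_div, norm_div, Real.norm_eq_abs, Real.norm_eq_abs,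
    div_le_iff₀ (abs_pos.mpr hs0)] at this
  exact this

lemma K_zero (D : ℝ → ℝ) : K D 0 = 0 := by simp [K]

lemma K_cont {D : ℝ → ℝ} (hD : Continuous D) (hD0 : D 0 = 0) {s : ℝ} (hs : s ∈ Ioo (-π) π) :
    ContinuousAt (K D) s := by
  by_cases h0 : s = 0
  · subst h0
    obtain ⟨B, hB0, hB⟩ := exists_B (ε := 1) one_pos (by linarith [Real.pi_gt_three])
    rw [Metric.continuousAt_iff]
    intro r hr
    have hr' : 0 < r / (B ^ 3 + 1) := by positivity
    obtain ⟨δ, hδ, hd⟩ := Metric.continuous_iff.mp hD 0 _ hr'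
    refine ⟨min δ 1, lt_min hδ one_pos, fun {x} hx => ?_⟩
    rw [K_zero, Real.dist_eq, sub_zero]
    rw [Real.dist_eq, sub_zero] at hx
    have hx1 := hx.trans_le (min_le_left _ _)
    have hx2 := hx.trans_le (min_le_right _ _)
    have := K_bound (D := D) (s := x) (η := r / (B ^ 3 + 1)) (B := B) (by
      intro y hy
      have := hd y (by rw [Real.dist_eq, sub_zero]; linarith)
      rw [hD0, Real.dist_eq, sub_zero] at this
      exact this.le) (hB x (abs_le.mp hx2.le)) hB0
    refine this.trans_lt ?_
    rw [mul_div_assoc', div_lt_iff₀ (by positivity)]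
    nlinarith
  · exact (J_deriv hD s).continuousAt.div (by fun_prop) (pow_ne_zero _ (sin_ne hs h0))


lemma F0_cont {G D : ℝ → ℝ} (hD : Continuous D) (hG : ∀ x, HasDerivAt G (D x) x) (hD0 : D 0 = 0)
    {s : ℝ} (hs : s ∈ Ioo (-π) π) : ContinuousAt (F0 G D) s := by
  have h1 := (one_add_cos_pos hs).ne'
  have h2 := K_cont hD hD0 hs
  have h3 := (hG s).continuousAt
  unfold F0
  fun_prop (disch := assumption)

lemma F1_cont {G D : ℝ → ℝ} (hD : Continuous D) (hG : ∀ x, HasDerivAt G (D x) x) (hD0 : D 0 = 0)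
    {s : ℝ} (hs : s ∈ Ioo (-π) π) : ContinuousAt (F1 G D) s := by
  have h1 := (one_add_cos_pos hs).ne'
  have h2 := K_cont hD hD0 hs
  have h3 := (hG s).continuousAt
  unfold F1
  fun_prop (disch := assumption)

lemma F2_cont {G D : ℝ → ℝ} (hD : Continuous D) (hG : ∀ x, HasDerivAt G (D x) x) (hD0 : D 0 = 0)
    {s : ℝ} (hs : s ∈ Ioo (-π) π) : ContinuousAt (F2 G D) s := by
  have h1 := pow_ne_zero 2 (one_add_cos_pos hs).ne'
  have h2 := K_cont hD hD0 hs
  have h3 := (hG s).continuousAt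
  unfold F2
  fun_prop (disch := assumption)

lemma F0_deriv' {G D : ℝ → ℝ} (hD : Continuous D) (hG : ∀ x, HasDerivAt G (D x) x)
    {s : ℝ} (hs : s ∈ Ioo (-π) π) (h0 : s ≠ 0) :
    HasDerivAt (F0 G D) (F1 G D s) s := by
  have h1 := (one_add_cos_pos hs).ne'
  have h2 := sin_ne hs h0
  have hK := (J_deriv hD s).fun_div ((Real.hasDerivAt_sin s).fun_pow 3) (pow_ne_zero 3 h2)
  have hq := (Real.hasDerivAt_sin s).fun_div ((Real.hasDerivAt_cos s).const_add 1) h1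
  have := (hq.fun_mul (hG s)).fun_sub (((Real.hasDerivAt_sin s).fun_pow 2).fun_mul hK)
  refine this.congr_deriv ?_
  have hsq := Real.sin_sq_add_cos_sq s
  simp only [F1, K]
  generalize J D s = j at *
  generalize sin s = a at *
  generalize cos s = c at *
  have e1 : a ^ 2 = (1 - c) * (1 + c) := by linarith
  push_cast
  have e2 : (1 - c) / a = a / (1 + c) := by
    rw [div_eq_div_iff h2 h1]; linarith
  have e3 : (c * (1 + c) - a * -a) / (1 + c) ^ 2 = 1 / (1 + c) := by
    rw [div_eq_div_iff (pow_ne_zero _ h1) h1]; linear_combination (1 + c) * hsq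
  rw [e3]
  have e4 : a ^ 2 * (((1 - c) * D s * a ^ 3 - j * (3 * a ^ 2 * c)) / (a ^ 3) ^ 2)
      = (1 - c) / a * D s - 3 * c * j / a ^ 2 := by
    field_simp
  have e5 : 2 * a ^ 1 * c * (j / a ^ 3) = 2 * c * j / a ^ 2 := by field_simp
  have e6 : c * a * (j / a ^ 3) = c * j / a ^ 2 := by field_simp
  simp only [e4, e5, e6, e2]
  ring

lemma F1_deriv' {G D : ℝ → ℝ} (hD : Continuous D) (hG : ∀ x, HasDerivAt G (D x) x)
    {s : ℝ} (hs : s ∈ Ioo (-π) π) (h0 : s ≠ 0) :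
    HasDerivAt (F1 G D) (F2 G D s) s := by
  have h1 := (one_add_cos_pos hs).ne'
  have h2 := sin_ne hs h0
  have hK := (J_deriv hD s).fun_div ((Real.hasDerivAt_sin s).fun_pow 3) (pow_ne_zero 3 h2)
  have hq := (hG s).fun_div ((Real.hasDerivAt_cos s).const_add 1) h1
  have := hq.fun_add (((Real.hasDerivAt_cos s).fun_mul (Real.hasDerivAt_sin s)).fun_mul hK)
  refine this.congr_deriv ?_
  have hsq := Real.sin_sq_add_cos_sq s
  simp only [F2, K]
  generalize J D s = j at *
  generalize sin s = a at *
  generalize cos s = c at *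
  push_cast
  have e2 : (1 - c) / a ^ 2 = 1 / (1 + c) := by
    rw [div_eq_div_iff (pow_ne_zero _ h2) h1]; linarith
  have e4 : c * a * (((1 - c) * D s * a ^ 3 - j * (3 * a ^ 2 * c)) / (a ^ 3) ^ 2)
      = c * ((1 - c) / a ^ 2) * D s - 3 * c ^ 2 * (j / a ^ 3) := by
    field_simp
  have e5 : (D s * (1 + c) - G s * -a) / (1 + c) ^ 2 = D s / (1 + c) + a / (1 + c) ^ 2 * G s := by
    field_simp
    ring
  simp only [e4, e5, e2]
  have e6 : D s / (1 + c) + c * (1 / (1 + c)) * D s = D s := by field_simp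
  linear_combination e6 - (j / a ^ 3) * hsq

lemma ext_deriv {f g : ℝ → ℝ} {s : Set ℝ} {x : ℝ} (hs : s ∈ 𝓝 x)
    (f_diff : ∀ y ∈ s, y ≠ x → HasDerivAt f (g y) y) (hf : ContinuousAt f x)
    (hg : ContinuousAt g x) : HasDerivAt f (g x) x := by
  have A : HasDerivWithinAt f (g x) (Ici x) x := by
    have hm : s ∩ Ioi x ∈ 𝓝[>] x := inter_mem (mem_nhdsWithin_of_mem_nhds hs) self_mem_nhdsWithin
    have diff : DifferentiableOn ℝ f (s ∩ Ioi x) := fun y hy =>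
      (f_diff y hy.1 (ne_of_gt hy.2)).differentiableAt.differentiableWithinAt
    refine hasDerivWithinAt_Ici_of_tendsto_deriv diff hf.continuousWithinAt hm ?_
    have : Tendsto g (𝓝[>] x) (𝓝 (g x)) := tendsto_inf_left hg
    refine this.congr' ?_
    filter_upwards [hm] with y hy using (f_diff y hy.1 (ne_of_gt hy.2)).deriv.symm
  have B : HasDerivWithinAt f (g x) (Iic x) x := by
    have hm : s ∩ Iio x ∈ 𝓝[<] x := inter_mem (mem_nhdsWithin_of_mem_nhds hs) self_mem_nhdsWithin
    have diff : DifferentiableOn ℝ f (s ∩ Iio x) := fun y hy =>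
      (f_diff y hy.1 (ne_of_lt hy.2)).differentiableAt.differentiableWithinAt
    refine hasDerivWithinAt_Iic_of_tendsto_deriv diff hf.continuousWithinAt hm ?_
    have : Tendsto g (𝓝[<] x) (𝓝 (g x)) := tendsto_inf_left hg
    refine this.congr' ?_
    filter_upwards [hm] with y hy using (f_diff y hy.1 (ne_of_lt hy.2)).deriv.symm
  simpa using B.union A

lemma F0_deriv {G D : ℝ → ℝ} (hD : Continuous D) (hG : ∀ x, HasDerivAt G (D x) x) (hD0 : D 0 = 0)
    {s : ℝ} (hs : s ∈ Ioo (-π) π) : HasDerivAt (F0 G D) (F1 G D s) s := by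
  by_cases h0 : s = 0
  · subst h0
    exact ext_deriv (isOpen_Ioo.mem_nhds hs) (fun y hy h => F0_deriv' hD hG hy h)
      (F0_cont hD hG hD0 hs) (F1_cont hD hG hD0 hs)
  · exact F0_deriv' hD hG hs h0

lemma F1_deriv {G D : ℝ → ℝ} (hD : Continuous D) (hG : ∀ x, HasDerivAt G (D x) x) (hD0 : D 0 = 0)
    {s : ℝ} (hs : s ∈ Ioo (-π) π) : HasDerivAt (F1 G D) (F2 G D s) s := by
  by_cases h0 : s = 0
  · subst h0
    exact ext_deriv (isOpen_Ioo.mem_nhds hs) (fun y hy h => F1_deriv' hD hG hy h)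
      (F1_cont hD hG hD0 hs) (F2_cont hD hG hD0 hs)
  · exact F1_deriv' hD hG hs h0

noncomputable def P (G D : ℝ → ℝ) (ρ : ℝ) : ℝ := -∫ s in (0:ℝ)..ρ, F0 G D s

lemma P_deriv {G D : ℝ → ℝ} (hD : Continuous D) (hG : ∀ x, HasDerivAt G (D x) x) (hD0 : D 0 = 0)
    {s : ℝ} (hs : s ∈ Ioo (-π) π) : HasDerivAt (P G D) (-F0 G D s) s := by
  have hc : ContinuousOn (F0 G D) (Ioo (-π) π) :=
    fun x hx => (F0_cont hD hG hD0 hx).continuousWithinAt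
  have hsub : uIcc 0 s ⊆ Ioo (-π) π := by
    intro x hx
    rcases mem_uIcc.mp hx with h | h
    · exact ⟨by linarith [Real.pi_pos], by linarith [hs.2]⟩
    · exact ⟨by linarith [hs.1], by linarith [Real.pi_pos]⟩
  exact (intervalIntegral.integral_hasDerivAt_right (hc.mono hsub).intervalIntegrable
    (hc.stronglyMeasurableAtFilter isOpen_Ioo s hs) (F0_cont hD hG hD0 hs)).neg

lemma contDiffOn_step {n : ℕ} {f f' : ℝ → ℝ} {U : Set ℝ} (hU : IsOpen U)
    (h : ∀ x ∈ U, HasDerivAt f (f' x) x) (h' : ContDiffOn ℝ n f' U) :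
    ContDiffOn ℝ (n + 1 : ℕ) f U := by
  push_cast
  rw [contDiffOn_succ_iff_deriv_of_isOpen hU]
  refine ⟨fun x hx => (h x hx).differentiableAt.differentiableWithinAt, by simp, ?_⟩
  exact h'.congr fun x hx => (h x hx).deriv

lemma P_contDiff {G D : ℝ → ℝ} (hD : Continuous D) (hG : ∀ x, HasDerivAt G (D x) x)
    (hD0 : D 0 = 0) : ContDiffOn ℝ 3 (P G D) (Ioo (-π) π) := by
  have h2 : ContDiffOn ℝ (0 : ℕ) (F2 G D) (Ioo (-π) π) := by
    rw [Nat.cast_zero, contDiffOn_zero]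
    exact fun x hx => (F2_cont hD hG hD0 hx).continuousWithinAt
  have h1 := contDiffOn_step isOpen_Ioo (fun x hx => F1_deriv hD hG hD0 hx) h2
  have h0 := contDiffOn_step isOpen_Ioo (fun x hx => F0_deriv hD hG hD0 hx) h1
  exact contDiffOn_step isOpen_Ioo (fun x hx => P_deriv hD hG hD0 hx) h0.neg

lemma I_eq {G D : ℝ → ℝ} (hD : Continuous D) (hG : ∀ x, HasDerivAt G (D x) x) (s : ℝ) :
    ∫ x in (0:ℝ)..s, sin x * G x = (1 - cos s) * G s - J D s := by
  have hGc : Continuous G := continuous_iff_continuousAt.mpr fun x => (hG x).continuousAt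
  have hc : Continuous fun x => sin x * G x := by fun_prop
  rw [intervalIntegral.integral_eq_sub_of_hasDerivAt
    (f := fun s => (1 - cos s) * G s - J D s) (fun x _ => ?_) (hc.intervalIntegrable _ _)]
  · simp [J]
  · refine ((((Real.hasDerivAt_cos x).const_sub 1).fun_mul (hG x)).fun_sub
      (J_deriv hD x)).congr_deriv ?_
    ring

lemma Aop_eq {ε : ℝ} (hε : 0 < ε) (hεπ : ε < π) {g G D : ℝ → ℝ} (hD : Continuous D)
    (hG : ∀ x, HasDerivAt G (D x) x) (hgG : ∀ x ∈ Icc (-ε) ε, G x = g x) :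
    ∀ ρ ∈ Icc (-ε) ε, Aop g ρ = P G D ρ := by
  intro ρ hρ
  have h0 : (0:ℝ) ∈ Icc (-ε) ε := ⟨by linarith, hε.le⟩
  unfold Aop P
  congr 1
  refine intervalIntegral.integral_congr fun s hs => ?_
  have hs' := uIcc_subset_Icc h0 hρ hs
  have hsπ : s ∈ Ioo (-π) π := ⟨by linarith [hs'.1], by linarith [hs'.2]⟩
  have : ∫ x in (0:ℝ)..s, sin x * g x = ∫ x in (0:ℝ)..s, sin x * G x := by
    refine intervalIntegral.integral_congr fun x hx => ?_
    simp only [hgG x (uIcc_subset_Icc h0 hs' hx)]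
  simp only [this, I_eq hD hG]
  by_cases hz : s = 0
  · simp [hz, F0]
  have h1 := (one_add_cos_pos hsπ).ne'
  have h2 := sin_ne hsπ hz
  have hsq := Real.sin_sq_add_cos_sq s
  have e2 : (1 - cos s) / sin s = sin s / (1 + cos s) := by
    rw [div_eq_div_iff h2 h1]; linarith
  rw [F0, K, ← e2]
  field_simp

lemma bounds {ε : ℝ} (hε : 0 < ε) (hεπ : ε < π) :
    ∃ C > 0, ∀ (G D : ℝ → ℝ) (M₀ M₁ : ℝ), (∀ x ∈ Icc (-ε) ε, |G x| ≤ M₀) →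
      (∀ x ∈ Icc (-ε) ε, |D x| ≤ M₁) → ∀ s ∈ Icc (-ε) ε,
      |F0 G D s| ≤ C * (M₀ + M₁) ∧ |F1 G D s| ≤ C * (M₀ + M₁) ∧ |F2 G D s| ≤ C * (M₀ + M₁) := by
  obtain ⟨B, hB0, hB⟩ := exists_B hε hεπ
  have hpos : ∀ s ∈ Icc (-ε) ε, 0 < 1 + cos s := fun s hs =>
    one_add_cos_pos ⟨by linarith [hs.1], by linarith [hs.2]⟩
  have hc : ContinuousOn (fun s => (1 + cos s)⁻¹) (Icc (-ε) ε) :=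
    ContinuousOn.inv₀ (by fun_prop) fun s hs => (hpos s hs).ne'
  obtain ⟨a, ha⟩ := isCompact_Icc.exists_bound_of_continuousOn hc
  have ha0 : 0 ≤ a := (norm_nonneg _).trans (ha 0 ⟨by linarith, hε.le⟩)
  refine ⟨a + a ^ 2 + 1 + 2 * B ^ 3, by positivity, ?_⟩
  intro G D M₀ M₁ hM₀ hM₁ s hs
  have hG := hM₀ s hs
  have hDs := hM₁ s hs
  have m0 := (abs_nonneg _).trans hG
  have m1 := (abs_nonneg _).trans hDs
  have hK : |K D s| ≤ B ^ 3 * M₁ := K_bound (fun x hx => hM₁ x (by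
    have := hx.trans (abs_le.mpr hs)
    exact abs_le.mp this)) (hB s hs) hB0
  have hS := Real.abs_sin_le_one s
  have hC := Real.abs_cos_le_one s
  have hA := ha s hs
  rw [Real.norm_eq_abs] at hA
  have hS2 : |sin s ^ 2| ≤ 1 := by rw [abs_pow]; exact pow_le_one₀ (abs_nonneg _) hS
  have hC2 : |1 + cos s ^ 2| ≤ 2 := by
    have : |cos s ^ 2| ≤ 1 := by rw [abs_pow]; exact pow_le_one₀ (abs_nonneg _) hC
    refine (abs_add_le _ _).trans ?_
    rw [abs_one]; linarith
  have hA2 : |(1 + cos s)⁻¹ ^ 2| ≤ a ^ 2 := by rw [abs_pow]; gcongr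
  have p0 : 0 ≤ a * M₀ := by positivity
  have p1 : 0 ≤ a * M₁ := by positivity
  have p2 : 0 ≤ a ^ 2 * M₀ := by positivity
  have p3 : 0 ≤ a ^ 2 * M₁ := by positivity
  have p4 : 0 ≤ B ^ 3 * M₀ := by positivity
  have p5 : 0 ≤ B ^ 3 * M₁ := by positivity
  refine ⟨?_, ?_, ?_⟩
  · have t1 : |sin s * (1 + cos s)⁻¹ * G s| ≤ 1 * a * M₀ := by
      rw [abs_mul, abs_mul]; gcongr
    have t2 : |sin s ^ 2 * K D s| ≤ 1 * (B ^ 3 * M₁) := by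
      rw [abs_mul]; gcongr
    rw [F0, div_eq_mul_inv]
    refine (abs_sub _ _).trans ?_
    linarith
  · have t1 : |G s * (1 + cos s)⁻¹| ≤ M₀ * a := by
      rw [abs_mul]; gcongr
    have t2 : |cos s * sin s * K D s| ≤ 1 * 1 * (B ^ 3 * M₁) := by
      rw [abs_mul, abs_mul]; gcongr
    rw [F1, div_eq_mul_inv]
    refine (abs_add_le _ _).trans ?_
    linarith
  · have t1 : |sin s * (1 + cos s)⁻¹ ^ 2 * G s| ≤ 1 * a ^ 2 * M₀ := by
      rw [abs_mul, abs_mul]; gcongr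
    have t2 : |(1 + cos s ^ 2) * K D s| ≤ 2 * (B ^ 3 * M₁) := by
      rw [abs_mul]; gcongr
    rw [F2, div_eq_mul_inv, ← inv_pow]
    refine (abs_sub _ _).trans ?_
    have := abs_add_le (sin s * (1 + cos s)⁻¹ ^ 2 * G s) (D s)
    linarith

lemma abs_le_of_or {a b c : ℝ} (h : a = b ∨ a = 0) (hb : |b| ≤ c) : |a| ≤ c := by
  rcases h with h | h
  · rwa [h]
  · rw [h, abs_zero]; exact (abs_nonneg _).trans hb

end AopAux

/-- If `g` is even and `C¹` on `[-ε,ε]`, then `A(g)` is `C³` there; moreover `A` is a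
continuous linear map from the even `C¹` functions (with the `C¹` norm) to the even `C³`
functions (with the `C³` norm): all derivatives of `A(g)` up to order `3` are bounded by a
uniform constant times the `C¹` norm of `g`. -/
theorem stmt2 (ε : ℝ) (hε : 0 < ε) (hεπ : ε < Real.pi) :
    (∀ g : ℝ → ℝ, ContDiffOn ℝ 1 g (Icc (-ε) ε) → (∀ x, g (-x) = g x) →
      ContDiffOn ℝ 3 (Aop g) (Icc (-ε) ε)) ∧
    ∃ C > 0, ∀ g : ℝ → ℝ, ContDiffOn ℝ 1 g (Icc (-ε) ε) → (∀ x, g (-x) = g x) →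
      ∀ i : ℕ, i ≤ 3 → ∀ ρ ∈ Icc (-ε) ε,
        |iteratedDeriv i (Aop g) ρ| ≤
          C * (sSup ((fun x => |g x|) '' Icc (-ε) ε) +
               sSup ((fun x => |deriv g x|) '' Icc (-ε) ε)) := by
  refine ⟨?_, ?_⟩
  · intro g hg hev
    obtain ⟨G, D, hD, hG, hD0, hgG⟩ := AopAux.ext hε hg hev
    refine ((AopAux.P_contDiff hD hG hD0).mono ?_).congr (AopAux.Aop_eq hε hεπ hD hG hgG)
    exact fun x hx => ⟨by linarith [hx.1], by linarith [hx.2]⟩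
  · obtain ⟨C, hC, hb⟩ := AopAux.bounds hε hεπ
    refine ⟨C * (1 + ε), by positivity, ?_⟩
    intro g hg hev i hi ρ hρ
    obtain ⟨G, D, hD, hG, hD0, hgG⟩ := AopAux.ext hε hg hev
    have hsub : ∀ x ∈ Icc (-ε) ε, x ∈ Ioo (-π) π :=
      fun x hx => ⟨by linarith [hx.1], by linarith [hx.2]⟩
    have hA := AopAux.Aop_eq hε hεπ hD hG hgG
    obtain ⟨hd1, hd2⟩ := AopAux.step hε (h := g) (fun x _ => hG x)
      (fun x hx => (hgG x (Ioo_subset_Icc_self hx)).symm)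
    set M₀ := sSup ((fun x => |g x|) '' Icc (-ε) ε) with hM₀
    set M₁ := sSup ((fun x => |deriv g x|) '' Icc (-ε) ε) with hM₁
    have hG0 : ∀ x ∈ Icc (-ε) ε, |G x| ≤ M₀ := by
      intro x hx
      rw [hgG x hx]
      refine le_csSup ?_ (mem_image_of_mem _ hx)
      exact isCompact_Icc.bddAbove_image hg.continuousOn.abs
    have hD1 : ∀ x ∈ Icc (-ε) ε, |D x| ≤ M₁ := by
      have hbdd : BddAbove ((fun x => |deriv g x|) '' Icc (-ε) ε) := by
        obtain ⟨m, hm⟩ := isCompact_Icc.exists_bound_of_continuousOn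
          (hD.continuousOn (s := Icc (-ε) ε))
        refine ⟨m, ?_⟩
        rintro _ ⟨x, hx, rfl⟩
        exact AopAux.abs_le_of_or (hd2 x hx) (hm x hx)
      have hcl : IsClosed {x | |D x| ≤ M₁} := isClosed_le hD.abs continuous_const
      have : Ioo (-ε) ε ⊆ {x | |D x| ≤ M₁} := by
        intro x hx
        have := le_csSup hbdd (mem_image_of_mem (fun x => |deriv g x|) (Ioo_subset_Icc_self hx))
        simp only [hd1 x hx] at this
        exact this
      have h2 := hcl.closure_subset_iff.mpr this
      rw [closure_Ioo (by linarith)] at h2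
      exact h2
    have hF := hb G D M₀ M₁ hG0 hD1
    have m0 := (abs_nonneg _).trans (hG0 ρ hρ)
    have m1 := (abs_nonneg _).trans (hD1 ρ hρ)
    have hm : 0 ≤ C * (M₀ + M₁) := by positivity
    have hle : C * (M₀ + M₁) ≤ C * (1 + ε) * (M₀ + M₁) := by
      nlinarith [mul_nonneg hm hε.le]
    obtain ⟨a1, b1⟩ := AopAux.step hε (h := Aop g)
      (fun x hx => AopAux.P_deriv hD hG hD0 (hsub x hx))
      (fun x hx => hA x (Ioo_subset_Icc_self hx))
    obtain ⟨a2, b2⟩ := AopAux.step hε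
      (fun x hx => (AopAux.F0_deriv hD hG hD0 (hsub x hx)).fun_neg) a1
    obtain ⟨a3, b3⟩ := AopAux.step hε
      (fun x hx => (AopAux.F1_deriv hD hG hD0 (hsub x hx)).fun_neg) a2
    interval_cases i
    · rw [iteratedDeriv_zero, hA ρ hρ, AopAux.P, abs_neg]
      have h0 : (0:ℝ) ∈ Icc (-ε) ε := ⟨by linarith, hε.le⟩
      have := intervalIntegral.norm_integral_le_of_norm_le_const (a := 0) (b := ρ)
        (f := AopAux.F0 G D) (C := C * (M₀ + M₁))
        (fun x hx => (hF x (uIcc_subset_Icc h0 hρ (uIoc_subset_uIcc hx))).1)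
      rw [Real.norm_eq_abs, sub_zero] at this
      have h3 : |ρ| ≤ ε := abs_le.mpr hρ
      have h4 := mul_le_mul_of_nonneg_left h3 hm
      nlinarith
    · rw [iteratedDeriv_one]
      refine (AopAux.abs_le_of_or (b1 ρ hρ) ?_).trans hle
      rw [abs_neg]; exact (hF ρ hρ).1
    · rw [iteratedDeriv_succ, iteratedDeriv_one]
      refine (AopAux.abs_le_of_or (b2 ρ hρ) ?_).trans hle
      rw [abs_neg]; exact (hF ρ hρ).2.1
    · rw [iteratedDeriv_succ, iteratedDeriv_succ, iteratedDeriv_one]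
      refine (AopAux.abs_le_of_or (b3 ρ hρ) ?_).trans hle
      rw [abs_neg]; exact (hF ρ hρ).2.2
end

section
/- Let f: ℝ → ℝ be a C¹ function, and for each t ∈ ℝ let U_t denote the unique even C² solution on (−π,π) of U'' + (cot ρ)·U' + f(U) = 0 with U_t(0) = t. Then the solution depends on t in a C¹ way: for every ρ₀ ∈ (−π,π), the map t ↦ U_t(ρ₀) is C¹ on ℝ. -/
open Real Set

/-- `U` is an even `C²` solution of `U'' + (cot ρ)·U' + f(U) = 0` on `(-π, π)`. -/
def IsEvenSol (f U : ℝ → ℝ) : Prop :=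
  (∀ ρ ∈ Set.Ioo (-Real.pi) Real.pi, U (-ρ) = U ρ) ∧
  ContDiffOn ℝ 2 U (Set.Ioo (-Real.pi) Real.pi) ∧
  ∀ ρ ∈ Set.Ioo (-Real.pi) Real.pi, ρ ≠ 0 →
    deriv (deriv U) ρ + (Real.cos ρ / Real.sin ρ) * deriv U ρ + f (U ρ) = 0

noncomputable def Kc (R A : ℝ) : ℝ := 2 * |Real.cos R / Real.sin R| + A + 2

lemma cot_bd {R ρ : ℝ} (hR : R < π) (h0 : 0 < ρ) (h1 : ρ ≤ R) :
    -(Real.cos ρ / Real.sin ρ) ≤ |Real.cos R / Real.sin R| := by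
  have hs : 0 < Real.sin ρ := Real.sin_pos_of_pos_of_lt_pi h0 (by linarith)
  have hsR : 0 < Real.sin R := Real.sin_pos_of_pos_of_lt_pi (by linarith) hR
  have h2 : 0 ≤ Real.sin (R - ρ) :=
    Real.sin_nonneg_of_nonneg_of_le_pi (by linarith) (by linarith)
  rw [Real.sin_sub] at h2
  have h3 : Real.cos R / Real.sin R ≤ Real.cos ρ / Real.sin ρ := by
    rw [div_le_div_iff₀ hsR hs]; linarith
  have := neg_abs_le (Real.cos R / Real.sin R)
  linarith

lemma energy {R A ε b : ℝ} (hR : R < π) (hA : 0 ≤ A) (hε : 0 ≤ ε) (hb : 0 ≤ b) (hbR : b ≤ R)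
    (D D1 g : ℝ → ℝ) (hD : ∀ ρ ∈ Icc 0 b, HasDerivAt D (D1 ρ) ρ)
    (hD1c : ContinuousOn D1 (Icc 0 b))
    (hD1 : ∀ ρ ∈ Ioo 0 b, HasDerivAt D1 (-(Real.cos ρ / Real.sin ρ) * D1 ρ - g ρ) ρ)
    (hg : ∀ ρ ∈ Ioo 0 b, |g ρ| ≤ A * |D ρ| + ε) (h0 : D1 0 = 0) :
    D b ^ 2 ≤ (D 0 ^ 2 + ε ^ 2) * Real.exp (Kc R A * R) := by
  set K := Kc R A with hK
  have hK0 : 2 ≤ K := by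
    have := abs_nonneg (Real.cos R / Real.sin R)
    simp only [hK, Kc]; linarith
  have hDc : ContinuousOn D (Icc 0 b) := fun ρ h => (hD ρ h).continuousAt.continuousWithinAt
  let E : ℝ → ℝ := fun ρ => (D1 ρ ^ 2 + D ρ ^ 2 + ε ^ 2) * Real.exp (-(K * ρ))
  have hE : AntitoneOn E (Icc 0 b) := by
    apply antitoneOn_of_hasDerivWithinAt_nonpos (convex_Icc 0 b)
      (f' := fun ρ => (2 * D1 ρ * (-(Real.cos ρ / Real.sin ρ) * D1 ρ - g ρ) + 2 * D ρ * D1 ρ)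
        * Real.exp (-(K * ρ)) + (D1 ρ ^ 2 + D ρ ^ 2 + ε ^ 2) * (Real.exp (-(K * ρ)) * (-K)))
    · exact (((hD1c.pow 2).add (hDc.pow 2)).add continuousOn_const).mul (by fun_prop)
    · intro ρ hρ
      rw [interior_Icc] at hρ
      have e1 := hD1 ρ hρ
      have e2 := hD ρ (Ioo_subset_Icc_self hρ)
      have e3 : HasDerivAt (fun ρ => Real.exp (-(K * ρ))) (Real.exp (-(K * ρ)) * (-K)) ρ := by
        have := ((hasDerivAt_id ρ).const_mul K).neg.exp
        simpa using this
      have e4 := (((e1.pow 2).add (e2.pow 2)).add_const (ε ^ 2)).mul e3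
      refine (e4.congr_deriv ?_).hasDerivWithinAt
      simp
    · intro ρ hρ
      rw [interior_Icc] at hρ
      have hc := cot_bd hR hρ.1 (hρ.2.le.trans hbR)
      have hgg := hg ρ hρ
      have hex := Real.exp_pos (-(K * ρ))
      generalize Real.cos ρ / Real.sin ρ = q at *
      generalize D1 ρ = y at *
      generalize D ρ = x at *
      generalize g ρ = z at *
      have k1 : -q * y ^ 2 ≤ |Real.cos R / Real.sin R| * y ^ 2 :=
        mul_le_mul_of_nonneg_right hc (sq_nonneg _)
      have k2 : -(y * z) ≤ |y| * (A * |x| + ε) := by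
        calc -(y * z) ≤ |y * z| := neg_le_abs _
          _ = |y| * |z| := abs_mul _ _
          _ ≤ _ := by gcongr
      have k3 : 2 * (|y| * |x|) ≤ y ^ 2 + x ^ 2 := by
        rw [← sq_abs y, ← sq_abs x]; nlinarith [sq_nonneg (|y| - |x|)]
      have k4 : 2 * (|y| * ε) ≤ y ^ 2 + ε ^ 2 := by
        rw [← sq_abs y]; nlinarith [sq_nonneg (|y| - ε)]
      have k5 : 2 * (x * y) ≤ y ^ 2 + x ^ 2 := by nlinarith [sq_nonneg (x - y)]
      have k6 := mul_le_mul_of_nonneg_left k3 hA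
      have key : 2 * y * (-q * y - z) + 2 * x * y ≤ K * (y ^ 2 + x ^ 2 + ε ^ 2) := by
        have hC := abs_nonneg (Real.cos R / Real.sin R)
        simp only [hK, Kc]
        have m1 := mul_nonneg hC (sq_nonneg x)
        have m2 := mul_nonneg hC (sq_nonneg ε)
        have m3 := mul_nonneg hA (sq_nonneg ε)
        nlinarith [sq_nonneg x, sq_nonneg ε]
      nlinarith
  have h1 := hE (left_mem_Icc.2 hb) (right_mem_Icc.2 hb) hb
  simp only [E, h0] at h1
  simp only [mul_zero, neg_zero, Real.exp_zero, mul_one] at h1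
  have h2 : D b ^ 2 * Real.exp (-(K * b)) ≤ D 0 ^ 2 + ε ^ 2 := by
    have := Real.exp_pos (-(K * b))
    nlinarith [mul_nonneg (sq_nonneg (D1 b)) this.le, mul_nonneg (sq_nonneg ε) this.le]
  have h3 : D b ^ 2 ≤ (D 0 ^ 2 + ε ^ 2) * Real.exp (K * b) := by
    have := mul_le_mul_of_nonneg_right h2 (Real.exp_pos (K * b)).le
    rwa [mul_assoc, ← Real.exp_add, neg_add_cancel, Real.exp_zero, mul_one] at this
  refine h3.trans ?_
  gcongr

lemma c1crit (φ : ℝ → ℝ) (h : ∀ t, ∀ ε > 0, ∃ δ > 0, ∀ s r s' r', |s - t| < δ → |r - t| < δ →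
    |s' - t| < δ → |r' - t| < δ → s ≠ r → s' ≠ r' →
    |(φ s - φ r) / (s - r) - (φ s' - φ r') / (s' - r')| ≤ ε) : ContDiff ℝ 1 φ := by
  have hsl : ∀ r s, slope φ r s = (φ s - φ r) / (s - r) := fun r s => slope_def_field φ r s
  have hd : ∀ t, DifferentiableAt ℝ φ t := by
    intro t
    have hc : Cauchy (Filter.map (slope φ t) (nhdsWithin t {t}ᶜ)) := by
      rw [Metric.cauchy_iff]
      refine ⟨inferInstance, fun ε hε => ?_⟩
      obtain ⟨δ, hδ, H⟩ := h t (ε / 2) (by linarith)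
      refine ⟨slope φ t '' (Metric.ball t δ ∩ {t}ᶜ), Filter.image_mem_map
        (Filter.inter_mem (mem_nhdsWithin_of_mem_nhds (Metric.ball_mem_nhds t hδ)) self_mem_nhdsWithin), ?_⟩
      rintro _ ⟨s, hs, rfl⟩ _ ⟨s', hs', rfl⟩
      have := H s t s' t (by simpa [Real.dist_eq] using hs.1) (by simpa)
        (by simpa [Real.dist_eq] using hs'.1) (by simpa) hs.2 hs'.2
      rw [Real.dist_eq, hsl, hsl]; linarith
    obtain ⟨l, hl⟩ := CompleteSpace.complete hc
    exact (hasDerivAt_iff_tendsto_slope.2 hl).differentiableAt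
  rw [contDiff_one_iff_deriv]
  refine ⟨hd, ?_⟩
  rw [continuous_iff_continuousAt]
  intro t
  rw [Metric.continuousAt_iff]
  intro ε hε
  obtain ⟨δ, hδ, H⟩ := h t (ε / 2) (by linarith)
  refine ⟨δ, hδ, fun {r} hr => ?_⟩
  rw [Real.dist_eq] at hr
  have ev : ∀ r, |r - t| < δ → ∀ᶠ s in nhdsWithin r {r}ᶜ, |s - t| < δ ∧ s ≠ r := by
    intro r hr
    have : ∀ᶠ s in nhds r, |s - t| < δ :=
      (isOpen_lt (by fun_prop) continuous_const).mem_nhds hr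
    filter_upwards [this.filter_mono nhdsWithin_le_nhds, self_mem_nhdsWithin] with s h1 h2
    exact ⟨h1, h2⟩
  have htt : |t - t| < δ := by simpa
  have lim : ∀ r, Filter.Tendsto (slope φ r) (nhdsWithin r {r}ᶜ) (nhds (deriv φ r)) := fun r =>
    hasDerivAt_iff_tendsto_slope.1 (hd r).hasDerivAt
  have s1 : ∀ s, |s - t| < δ → s ≠ r → |slope φ r s - deriv φ t| ≤ ε / 2 := by
    intro s hs hsr
    refine le_of_tendsto ((tendsto_const_nhds.sub (lim t)).abs) ?_
    filter_upwards [ev t htt] with s' hs'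
    rw [hsl, hsl]
    exact H s r s' t hs hr hs'.1 htt hsr hs'.2
  have s2 : |deriv φ r - deriv φ t| ≤ ε / 2 := by
    refine le_of_tendsto (((lim r).sub tendsto_const_nhds).abs) ?_
    filter_upwards [ev r hr] with s hs
    exact s1 s hs.1 hs.2
  rw [Real.dist_eq]; linarith

lemma sol_facts {f U : ℝ → ℝ} (h : IsEvenSol f U) :
    (∀ ρ ∈ Ioo (-π) π, HasDerivAt U (deriv U ρ) ρ) ∧
    (∀ ρ ∈ Ioo (-π) π, HasDerivAt (deriv U) (deriv (deriv U) ρ) ρ) ∧ deriv U 0 = 0 := by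
  obtain ⟨he, hc, -⟩ := h
  have hd : DifferentiableOn ℝ U (Ioo (-π) π) := hc.differentiableOn (by norm_num)
  have hc1 : ContDiffOn ℝ 1 (deriv U) (Ioo (-π) π) :=
    hc.deriv_of_isOpen isOpen_Ioo (by norm_num)
  have hd1 : DifferentiableOn ℝ (deriv U) (Ioo (-π) π) := hc1.differentiableOn (by norm_num)
  refine ⟨fun ρ hρ => ((hd ρ hρ).differentiableAt (isOpen_Ioo.mem_nhds hρ)).hasDerivAt,
    fun ρ hρ => ((hd1 ρ hρ).differentiableAt (isOpen_Ioo.mem_nhds hρ)).hasDerivAt, ?_⟩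
  have h0 : (0 : ℝ) ∈ Ioo (-π) π := ⟨by linarith [Real.pi_pos], Real.pi_pos⟩
  have e : (fun x => U (-x)) =ᶠ[nhds 0] U := by
    filter_upwards [isOpen_Ioo.mem_nhds h0] with ρ hρ using he ρ hρ
  have e1 := e.deriv_eq
  rw [deriv_comp_neg] at e1
  simp at e1
  linarith

/-- linear combination version -/
lemma comb {f : ℝ → ℝ} {U : ℝ → ℝ → ℝ} (hU : ∀ t : ℝ, IsEvenSol f (U t) ∧ U t 0 = t)
    {R A ε b : ℝ} (hR : R < π) (hA : 0 ≤ A) (hε : 0 ≤ ε) (hb : 0 ≤ b) (hbR : b ≤ R)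
    (p q s r s' r' : ℝ)
    (hg : ∀ ρ ∈ Ioo 0 b, |p * (f (U s ρ) - f (U r ρ)) - q * (f (U s' ρ) - f (U r' ρ))| ≤
      A * |p * (U s ρ - U r ρ) - q * (U s' ρ - U r' ρ)| + ε) :
    (p * (U s b - U r b) - q * (U s' b - U r' b)) ^ 2 ≤
      ((p * (s - r) - q * (s' - r')) ^ 2 + ε ^ 2) * Real.exp (Kc R A * R) := by
  have F := fun t => sol_facts (hU t).1
  have hsub : ∀ ρ ∈ Icc 0 b, ρ ∈ Ioo (-π) π := fun ρ h =>
    ⟨by linarith [h.1, Real.pi_pos], by linarith [h.2]⟩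
  have := energy hR hA hε hb hbR (fun ρ => p * (U s ρ - U r ρ) - q * (U s' ρ - U r' ρ))
    (fun ρ => p * (deriv (U s) ρ - deriv (U r) ρ) - q * (deriv (U s') ρ - deriv (U r') ρ))
    (fun ρ => p * (f (U s ρ) - f (U r ρ)) - q * (f (U s' ρ) - f (U r' ρ)))
    (fun ρ h => ((((F s).1 ρ (hsub ρ h)).sub ((F r).1 ρ (hsub ρ h))).const_mul p).sub
      ((((F s').1 ρ (hsub ρ h)).sub ((F r').1 ρ (hsub ρ h))).const_mul q))
    (fun ρ h => (((((F s).2.1 ρ (hsub ρ h)).sub ((F r).2.1 ρ (hsub ρ h))).const_mul p).sub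
      ((((F s').2.1 ρ (hsub ρ h)).sub ((F r').2.1 ρ
        (hsub ρ h))).const_mul q)).continuousAt.continuousWithinAt)
    (fun ρ h => by
      have h' := hsub ρ (Ioo_subset_Icc_self h)
      refine (((((F s).2.1 ρ h').sub ((F r).2.1 ρ h')).const_mul p).sub
        ((((F s').2.1 ρ h').sub ((F r').2.1 ρ h')).const_mul q)).congr_deriv ?_
      have E := fun t => (hU t).1.2.2 ρ h' h.1.ne'
      linear_combination p * E s - p * E r - q * E s' + q * E r')
    hg (by simp [(F _).2.2])
  simpa only [(hU _).2] using this

lemma f_facts {f : ℝ → ℝ} (hf : ContDiff ℝ 1 f) (M : ℝ) :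
    ∃ A, 0 ≤ A ∧ (∀ x ∈ Icc (-M) M, |deriv f x| ≤ A) ∧
      ∀ x ∈ Icc (-M) M, ∀ y ∈ Icc (-M) M, |f x - f y| ≤ A * |x - y| := by
  have hc : Continuous (deriv f) := hf.continuous_deriv (by norm_num)
  obtain ⟨A, hA⟩ := isCompact_Icc.exists_bound_of_continuousOn (s := Icc (-M) M) hc.continuousOn
  refine ⟨max A 0, le_max_right _ _, fun x hx => (hA x hx).trans (le_max_left _ _), ?_⟩
  intro x hx y hy
  exact (convex_Icc (-M) M).norm_image_sub_le_of_norm_deriv_le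
    (fun x _ => (hf.differentiable (by norm_num)) x)
    (fun x hx => (hA x hx).trans (le_max_left _ _)) hy hx

lemma f_unif {f : ℝ → ℝ} (hf : ContDiff ℝ 1 f) (M : ℝ) {ε : ℝ} (hε : 0 < ε) :
    ∃ η > 0, ∀ u ∈ Icc (-M) M, ∀ x ∈ Icc (-M) M, ∀ y ∈ Icc (-M) M, |x - u| < η → |y - u| < η →
      |f x - f y - deriv f u * (x - y)| ≤ ε * |x - y| := by
  have hc : Continuous (deriv f) := hf.continuous_deriv (by norm_num)
  have hu := isCompact_Icc.uniformContinuousOn_of_continuous (s := Icc (-M) M) hc.continuousOn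
  rw [Metric.uniformContinuousOn_iff] at hu
  obtain ⟨η, hη, H⟩ := hu ε hε
  refine ⟨η, hη, fun u hu x hx y hy hxu hyu => ?_⟩
  have hd : ∀ z, HasDerivAt (fun z => f z - deriv f u * z) (deriv f z - deriv f u) z := by
    intro z
    have := ((hf.differentiable (by norm_num)) z).hasDerivAt.sub
      ((hasDerivAt_id z).const_mul (deriv f u))
    rw [mul_one] at this
    exact this
  have := ((convex_Icc (-M) M).inter (convex_ball u η)).norm_image_sub_le_of_norm_deriv_le
    (f := fun z => f z - deriv f u * z) (C := ε) (fun z _ => (hd z).differentiableAt)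
    (fun z hz => by
      rw [(hd z).deriv]
      exact (H z hz.1 u hu hz.2).le)
    ⟨hy, by simpa [Real.dist_eq] using hyu⟩ ⟨hx, by simpa [Real.dist_eq] using hxu⟩
  rw [Real.norm_eq_abs, Real.norm_eq_abs] at this
  convert this using 2
  ring

lemma main_pos (f : ℝ → ℝ) (hf : ContDiff ℝ 1 f)
    (U : ℝ → ℝ → ℝ) (hU : ∀ t : ℝ, IsEvenSol f (U t) ∧ U t 0 = t)
    (R : ℝ) (hR0 : 0 ≤ R) (hR : R < π) : ContDiff ℝ 1 (fun t => U t R) := by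
  have F := fun t => sol_facts (hU t).1
  have hsub : ∀ ρ ∈ Icc 0 R, ρ ∈ Ioo (-π) π := fun ρ h =>
    ⟨by linarith [h.1, Real.pi_pos], by linarith [h.2]⟩
  have hcont : ∀ t, ContinuousOn (U t) (Icc 0 R) := fun t ρ h =>
    ((F t).1 ρ (hsub ρ h)).continuousAt.continuousWithinAt
  apply c1crit
  intro t ε hε
  obtain ⟨M, hM⟩ := isCompact_Icc.exists_bound_of_continuousOn (hcont t)
  simp only [Real.norm_eq_abs] at hM
  obtain ⟨A, hA0, hA1, hA2⟩ := f_facts hf (M + 1)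
  set B := Real.exp (Kc R A * R / 2) with hB
  have hBpos : 0 < B := Real.exp_pos _
  have hB2 : Real.exp (Kc R A * R) = B ^ 2 := by
    rw [hB, ← Real.exp_nat_mul]; congr 1; push_cast; ring
  have hmemt : ∀ ρ ∈ Icc 0 R, U t ρ ∈ Icc (-(M+1)) (M+1) := fun ρ h => by
    have := abs_le.1 (hM ρ h); constructor <;> linarith
  have hmem1 : ∀ s, ∀ ρ ∈ Icc 0 R, |U s ρ - U t ρ| < 1 → U s ρ ∈ Icc (-(M+1)) (M+1) := by
    intro s ρ h h1
    have := abs_le.1 (hM ρ h); have := abs_lt.1 h1; constructor <;> linarith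
  -- Lipschitz bound up to b
  have lip : ∀ s r b, 0 ≤ b → b ≤ R → (∀ ρ ∈ Ioo 0 b, U s ρ ∈ Icc (-(M+1)) (M+1)) →
      (∀ ρ ∈ Ioo 0 b, U r ρ ∈ Icc (-(M+1)) (M+1)) → |U s b - U r b| ≤ B * |s - r| := by
    intro s r b hb hbR h1 h2
    have := comb hU hR hA0 le_rfl hb hbR 1 0 s r s r (fun ρ h => by
      simpa using hA2 _ (h1 ρ h) _ (h2 ρ h))
    rw [hB2] at this
    simp only [one_mul, zero_mul, sub_zero, ne_eq, OfNat.ofNat_ne_zero, not_false_eq_true,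
      zero_pow, add_zero] at this
    apply abs_le_of_sq_le_sq _ (by positivity) |> fun h => h
    rw [mul_pow, sq_abs]; linarith
  have close : ∀ s, B * |s - t| < 1 → ∀ ρ ∈ Icc 0 R, |U s ρ - U t ρ| < 1 := by
    intro s hs
    by_contra! hcon
    obtain ⟨ρ₁, hρ₁, hbad⟩ := hcon
    have hdc : ContinuousOn (fun ρ => |U s ρ - U t ρ|) (Icc 0 R) := ((hcont s).sub (hcont t)).abs
    have hcl : IsClosed (Icc 0 R ∩ (fun ρ => |U s ρ - U t ρ|) ⁻¹' Ici 1) :=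
      hdc.preimage_isClosed_of_isClosed isClosed_Icc isClosed_Ici
    have hcpt : IsCompact (Icc 0 R ∩ (fun ρ => |U s ρ - U t ρ|) ⁻¹' Ici 1) :=
      isCompact_Icc.of_isClosed_subset hcl inter_subset_left
    obtain ⟨b, ⟨hb, hb1⟩, hmin⟩ := hcpt.exists_isLeast ⟨ρ₁, hρ₁, hbad⟩
    have hin : ∀ ρ ∈ Ioo 0 b, ρ ∈ Icc 0 R := fun ρ h => ⟨h.1.le, h.2.le.trans hb.2⟩
    have := lip s t b hb.1 hb.2 (fun ρ h => hmem1 s ρ (hin ρ h) (by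
      by_contra! hh
      exact absurd (hmin ⟨hin ρ h, hh⟩) (not_le.2 h.2))) (fun ρ h => hmemt ρ (hin ρ h))
    have hb1' : 1 ≤ |U s b - U t b| := hb1
    linarith
  have hmem : ∀ s, B * |s - t| < 1 → ∀ ρ ∈ Icc 0 R, U s ρ ∈ Icc (-(M+1)) (M+1) :=
    fun s hs ρ h => hmem1 s ρ h (close s hs ρ h)
  have lip' : ∀ s r, B * |s - t| < 1 → B * |r - t| < 1 → ∀ ρ ∈ Icc 0 R,
      |U s ρ - U r ρ| ≤ B * |s - r| := fun s r hs hr ρ h =>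
    lip s r ρ h.1 h.2 (fun x hx => hmem s hs x ⟨hx.1.le, hx.2.le.trans h.2⟩)
      (fun x hx => hmem r hr x ⟨hx.1.le, hx.2.le.trans h.2⟩)
  have hε' : 0 < ε / (2 * B ^ 2) := by positivity
  obtain ⟨η, hη, H⟩ := f_unif hf (M + 1) hε'
  have htt : B * |t - t| < 1 := by simp
  refine ⟨min 1 η / B, by positivity, ?_⟩
  have small : ∀ s, |s - t| < min 1 η / B → B * |s - t| < 1 ∧ B * |s - t| < η := by
    intro s hs
    rw [lt_div_iff₀ hBpos, mul_comm] at hs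
    exact ⟨hs.trans_le (min_le_left _ _), hs.trans_le (min_le_right _ _)⟩
  intro s r s' r' hs hr hs' hr' hne hne'
  have quot : ∀ s r, |s - t| < min 1 η / B → |r - t| < min 1 η / B → s ≠ r → ∀ ρ ∈ Icc 0 R,
      |(s - r)⁻¹ * (f (U s ρ) - f (U r ρ)) - deriv f (U t ρ) * ((s - r)⁻¹ * (U s ρ - U r ρ))|
        ≤ ε / (2 * B) := by
    intro s r hs hr hne ρ h
    obtain ⟨hs1, hs2⟩ := small s hs
    obtain ⟨hr1, hr2⟩ := small r hr
    have h1 := H _ (hmemt ρ h) _ (hmem s hs1 ρ h) _ (hmem r hr1 ρ h)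
      ((lip' s t hs1 htt ρ h).trans_lt hs2) ((lip' r t hr1 htt ρ h).trans_lt hr2)
    have h2 := lip' s r hs1 hr1 ρ h
    have hpos : 0 < |s - r| := abs_pos.2 (sub_ne_zero.2 hne)
    have e : (s - r)⁻¹ * (f (U s ρ) - f (U r ρ))
        - deriv f (U t ρ) * ((s - r)⁻¹ * (U s ρ - U r ρ))
        = (s - r)⁻¹ * (f (U s ρ) - f (U r ρ) - deriv f (U t ρ) * (U s ρ - U r ρ)) := by ring
    rw [e, abs_mul, abs_inv]
    calc |s - r|⁻¹ * _ ≤ |s - r|⁻¹ * (ε / (2 * B ^ 2) * (B * |s - r|)) := by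
          gcongr; exact h1.trans (by gcongr)
      _ = ε / (2 * B) := by field_simp
  have fin := comb hU hR hA0 (by positivity : 0 ≤ ε / B) hR0 le_rfl (s - r)⁻¹ (s' - r')⁻¹ s r s' r'
    (fun ρ hρ => by
      have h := Ioo_subset_Icc_self hρ
      have q1 := quot s r hs hr hne ρ h
      have q2 := quot s' r' hs' hr' hne' ρ h
      have q3 := hA1 _ (hmemt ρ h)
      set a := (s - r)⁻¹ * (f (U s ρ) - f (U r ρ))
      set a' := (s' - r')⁻¹ * (f (U s' ρ) - f (U r' ρ))
      set x := (s - r)⁻¹ * (U s ρ - U r ρ)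
      set x' := (s' - r')⁻¹ * (U s' ρ - U r' ρ)
      set d := deriv f (U t ρ)
      calc |a - a'| = |d * (x - x') + ((a - d * x) - (a' - d * x'))| := by congr 1; ring
        _ ≤ |d * (x - x')| + (|a - d * x| + |a' - d * x'|) :=
          (abs_add_le _ _).trans (by gcongr; exact abs_sub _ _)
        _ ≤ A * |x - x'| + (ε / (2 * B) + ε / (2 * B)) := by
          rw [abs_mul]; gcongr
        _ = _ := by field_simp; ring)
  rw [inv_mul_cancel₀ (sub_ne_zero.2 hne), inv_mul_cancel₀ (sub_ne_zero.2 hne'), hB2] at fin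
  have e2 : ((1 - 1 : ℝ) ^ 2 + (ε / B) ^ 2) * B ^ 2 = ε ^ 2 := by field_simp; ring
  rw [e2] at fin
  rw [div_eq_inv_mul, div_eq_inv_mul]
  exact abs_le_of_sq_le_sq fin hε.le

/-- The even solution `U_t` with `U_t(0) = t` depends on `t` in a `C¹` way:
for each `ρ₀ ∈ (-π,π)`, the map `t ↦ U_t(ρ₀)` is `C¹`. -/
theorem stmt4 (f : ℝ → ℝ) (hf : ContDiff ℝ 1 f)
    (U : ℝ → ℝ → ℝ) (hU : ∀ t : ℝ, IsEvenSol f (U t) ∧ U t 0 = t)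
    (ρ₀ : ℝ) (hρ₀ : ρ₀ ∈ Set.Ioo (-Real.pi) Real.pi) :
    ContDiff ℝ 1 (fun t => U t ρ₀) := by
  rcases le_total 0 ρ₀ with h | h
  · exact main_pos f hf U hU ρ₀ h hρ₀.2
  · have := main_pos f hf U hU (-ρ₀) (by linarith) (by linarith [hρ₀.1])
    have e : (fun t => U t ρ₀) = fun t => U t (-ρ₀) := funext fun t => ((hU t).1.1 ρ₀ hρ₀).symm
    rw [e]; exact this
end

section
/- Let f: ℝ → ℝ be a C¹ function with f(x) > 0 for all x > 0, and let t > 0. Then the even solution U_t vanishes at some point of (0,π); denote by r_t ∈ (0,π) the smallest positive zero of U_t. Moreover, if r_t > π/2, then U_t is concave on [π/2, r_t], i.e. U_t''(ρ) ≤ 0 for all ρ ∈ [π/2, r_t]. -/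
open Real Set

lemma aux_anti (f U : ℝ → ℝ) (hfpos : ∀ x > (0:ℝ), 0 < f x) (hU : IsEvenSol f U)
    (a : ℝ) (haπ : a < Real.pi) (hpos : ∀ x ∈ Set.Ioo 0 a, 0 < U x) :
    StrictAntiOn (fun x => Real.sin x * deriv U x) (Set.Icc 0 a) := by
  obtain ⟨-, hC, hE⟩ := hU
  have hC1 : ContDiffOn ℝ 1 (deriv U) (Set.Ioo (-Real.pi) Real.pi) :=
    ((contDiffOn_succ_iff_deriv_of_isOpen (n := 1) isOpen_Ioo).1 hC).2.2
  have hπ := Real.pi_pos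
  have hd : ∀ x ∈ Set.Ioo (-Real.pi) Real.pi, DifferentiableAt ℝ (deriv U) x := fun x hx =>
    (hC1.differentiableOn one_ne_zero).differentiableAt (isOpen_Ioo.mem_nhds hx)
  apply strictAntiOn_of_deriv_neg (convex_Icc _ _)
  · intro x hx
    have : x ∈ Set.Ioo (-Real.pi) Real.pi := ⟨by linarith [hx.1], by linarith [hx.2]⟩
    exact (Real.continuous_sin.continuousAt.mul (hd x this).continuousAt).continuousWithinAt
  · intro x hx
    rw [interior_Icc] at hx
    have hx' : x ∈ Set.Ioo (-Real.pi) Real.pi := ⟨by linarith [hx.1], by linarith [hx.2]⟩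
    have h1 := ((Real.hasDerivAt_sin x).mul (hd x hx').hasDerivAt).deriv
    have hs : 0 < Real.sin x := Real.sin_pos_of_pos_of_lt_pi hx.1 hx'.2
    have e := hE x hx' hx.1.ne'
    have h2 := hfpos _ (hpos x hx)
    have h3 : Real.cos x * deriv U x + Real.sin x * deriv (deriv U) x
        = - (Real.sin x * f (U x)) := by
      field_simp at e
      linarith
    have h4 : deriv (fun x => Real.sin x * deriv U x) x = _ := h1
    rw [h4, h3]
    have := mul_pos hs h2
    linarith

theorem stmt5 (f : ℝ → ℝ) (hf : ContDiff ℝ 1 f) (hfpos : ∀ x > (0:ℝ), 0 < f x)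
    (t : ℝ) (ht : 0 < t) (U : ℝ → ℝ) (hU : IsEvenSol f U) (hU0 : U 0 = t) :
    ∃ r ∈ Set.Ioo 0 Real.pi, U r = 0 ∧ (∀ ρ ∈ Set.Ioo 0 r, U ρ ≠ 0) ∧
      (Real.pi / 2 < r → ∀ ρ ∈ Set.Icc (Real.pi / 2) r, deriv (deriv U) ρ ≤ 0) := by
  have hπ := Real.pi_pos
  have hdU : ∀ x ∈ Set.Ioo (-Real.pi) Real.pi, DifferentiableAt ℝ U x := fun x hx =>
    (hU.2.1.differentiableOn two_ne_zero).differentiableAt (isOpen_Ioo.mem_nhds hx)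
  have hcU : ContinuousOn U (Set.Ioo (-Real.pi) Real.pi) := hU.2.1.continuousOn
  -- positivity from nonvanishing
  have hposOf : ∀ b < Real.pi, (∀ x ∈ Set.Icc 0 b, U x ≠ 0) → ∀ x ∈ Set.Icc 0 b, 0 < U x := by
    intro b hb hne x hx
    by_contra hcon
    have hsub : Set.Icc 0 x ⊆ Set.Ioo (-Real.pi) Real.pi := fun y hy =>
      ⟨by linarith [hy.1], by linarith [hy.2, hx.2]⟩
    obtain ⟨y, hy, hy0⟩ := intermediate_value_Icc' hx.1 (hcU.mono hsub)
      (show (0:ℝ) ∈ Set.Icc (U x) (U 0) from ⟨not_lt.1 hcon, by rw [hU0]; exact ht.le⟩)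
    exact hne y ⟨hy.1, hy.2.trans hx.2⟩ hy0
  -- existence of a zero
  have hex : ∃ z ∈ Set.Ioo 0 Real.pi, U z = 0 := by
    by_contra! hno
    have hpos : ∀ x ∈ Set.Ico 0 Real.pi, 0 < U x := by
      intro x hx
      refine hposOf x hx.2 ?_ x ⟨hx.1, le_rfl⟩
      intro y hy
      rcases hy.1.eq_or_lt with h | h
      · rw [← h, hU0]; exact ht.ne'
      · exact hno y ⟨h, hy.2.trans_lt hx.2⟩
    have hanti : ∀ a < Real.pi, StrictAntiOn (fun x => Real.sin x * deriv U x) (Set.Icc 0 a) :=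
      fun a ha => aux_anti f U hfpos hU a ha fun x hx => hpos x ⟨hx.1.le, hx.2.trans ha⟩
    obtain ⟨c, hc⟩ : ∃ c, c = - deriv U (Real.pi / 2) := ⟨_, rfl⟩
    have hc0 : 0 < c := by
      have := hanti (Real.pi / 2) (by linarith) ⟨le_rfl, by linarith⟩ ⟨by linarith, le_rfl⟩
        (by linarith : (0:ℝ) < Real.pi / 2)
      simp at this
      linarith
    have hW : AntitoneOn (fun x => U x - c * Real.log (Real.pi - x))
        (Set.Ico (Real.pi / 2) Real.pi) := by
      have hder : ∀ x ∈ Set.Ico (Real.pi / 2) Real.pi,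
          HasDerivAt (fun x => U x - c * Real.log (Real.pi - x))
            (deriv U x - c * (-1 / (Real.pi - x))) x := by
        intro x hx
        have h0 : Real.pi - x ≠ 0 := by linarith [hx.2]
        have h1 := (((hasDerivAt_id x).const_sub Real.pi).log h0).const_mul c
        exact (hdU x ⟨by linarith [hx.1], hx.2⟩).hasDerivAt.sub h1
      apply antitoneOn_of_deriv_nonpos (convex_Ico _ _)
      · exact fun x hx => (hder x hx).continuousAt.continuousWithinAt
      · exact fun x hx => (hder x (interior_subset hx)).differentiableAt.differentiableWithinAt
      · intro x hx
        have hx := interior_subset hx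
        rw [(hder x hx).deriv]
        have hx0 : 0 < Real.pi - x := by linarith [hx.2]
        have hs : 0 < Real.sin x := Real.sin_pos_of_pos_of_lt_pi (by linarith [hx.1]) hx.2
        have hs2 : Real.sin x ≤ Real.pi - x := by
          rw [← Real.sin_pi_sub]; exact Real.sin_le hx0.le
        have hv := (hanti x hx.2).antitoneOn (a := Real.pi / 2) ⟨by linarith, hx.1⟩
          ⟨by linarith [hx.1], le_rfl⟩ hx.1
        simp only [Real.sin_pi_div_two, one_mul] at hv
        have hneg : deriv U x < 0 := by
          by_contra hn
          have := mul_nonneg hs.le (not_lt.1 hn)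
          linarith
        have key : (Real.pi - x) * deriv U x ≤ -c := by nlinarith
        have : deriv U x - c * (-1 / (Real.pi - x)) = ((Real.pi - x) * deriv U x + c) / (Real.pi - x) := by
          field_simp
          ring
        rw [this]
        exact div_nonpos_of_nonpos_of_nonneg (by linarith) hx0.le
    obtain ⟨A, hA⟩ : ∃ A, A = U (Real.pi / 2) - c * Real.log (Real.pi - Real.pi / 2) := ⟨_, rfl⟩
    obtain ⟨K, hK⟩ : ∃ K, K = max 0 (A / c) := ⟨_, rfl⟩
    have hK0 : 0 ≤ K := hK ▸ le_max_left _ _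
    have hKA : A ≤ c * K := by
      have : A / c ≤ K := hK ▸ le_max_right _ _
      rw [div_le_iff₀ hc0] at this
      linarith
    have he1 : Real.exp (-K) ≤ 1 := Real.exp_le_one_iff.2 (by linarith)
    have he0 := Real.exp_pos (-K)
    have h3 := Real.pi_gt_three
    have := hW (a := Real.pi / 2) ⟨le_rfl, by linarith⟩ (b := Real.pi - Real.exp (-K))
      ⟨by linarith, by linarith⟩ (by linarith)
    simp only [sub_sub_cancel, Real.log_exp] at this
    rw [← hA] at this
    have hp := hpos (Real.pi - Real.exp (-K)) ⟨by linarith, by linarith⟩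
    linarith
  obtain ⟨z, hz, hz0⟩ := hex
  have hsub : Set.Icc 0 z ⊆ Set.Ioo (-Real.pi) Real.pi := fun y hy =>
    ⟨by linarith [hy.1], by linarith [hy.2, hz.2]⟩
  have hcomp : IsCompact (Set.Icc 0 z ∩ U ⁻¹' {0}) :=
    isCompact_Icc.of_isClosed_subset
      ((hcU.mono hsub).preimage_isClosed_of_isClosed isClosed_Icc isClosed_singleton)
      Set.inter_subset_left
  obtain ⟨r, ⟨hr, hr0⟩, hmin⟩ := hcomp.exists_isLeast ⟨z, ⟨hz.1.le, le_rfl⟩, hz0⟩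
  have hr0 : U r = 0 := hr0
  have hrpos : 0 < r := by
    rcases hr.1.eq_or_lt with h | h
    · rw [← h, hU0] at hr0; exact absurd hr0 ht.ne'
    · exact h
  have hrπ : r < Real.pi := hr.2.trans_lt hz.2
  have hne : ∀ x, 0 ≤ x → x < r → U x ≠ 0 := fun x h0 h1 h =>
    absurd (hmin ⟨⟨h0, h1.le.trans hr.2⟩, h⟩) (not_le.2 h1)
  have hpos : ∀ x ∈ Set.Ioo 0 r, 0 < U x := fun x hx =>
    hposOf x (hx.2.trans hrπ) (fun y hy => hne y hy.1 (hy.2.trans_lt hx.2)) x ⟨hx.1.le, le_rfl⟩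
  refine ⟨r, ⟨hrpos, hrπ⟩, hr0, fun x hx => hne x hx.1.le hx.2, ?_⟩
  intro _ x hx
  have hx0 : 0 < x := by linarith [hx.1]
  have hxπ : x < Real.pi := hx.2.trans_lt hrπ
  have hs : 0 < Real.sin x := Real.sin_pos_of_pos_of_lt_pi hx0 hxπ
  have hv := aux_anti f U hfpos hU r hrπ hpos ⟨le_rfl, hr.1⟩ ⟨hx0.le, hx.2⟩ hx0
  simp only [Real.sin_zero, zero_mul] at hv
  have hneg : deriv U x ≤ 0 := by
    by_contra hn
    have := mul_pos hs (not_le.1 hn)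
    linarith
  have hcos : Real.cos x ≤ 0 := Real.cos_nonpos_of_pi_div_two_le_of_le hx.1 (by linarith)
  have hq : Real.cos x / Real.sin x ≤ 0 := div_nonpos_of_nonpos_of_nonneg hcos hs.le
  have hUx : 0 ≤ U x := by
    rcases hx.2.eq_or_lt with h | h
    · rw [h, hr0]
    · exact (hpos x ⟨hx0, h⟩).le
  have hfx : 0 ≤ f (U x) := by
    have : closure (Set.Ioi (0:ℝ)) ⊆ {y | 0 ≤ f y} :=
      closure_minimal (fun y hy => (hfpos y hy).le) (isClosed_le continuous_const hf.continuous)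
    rw [closure_Ioi] at this
    exact this hUx
  have e := hU.2.2 x ⟨by linarith, hxπ⟩ hx0.ne'
  have := mul_nonneg_of_nonpos_of_nonpos hq hneg
  linarith
end

section
/- Let f: ℝ → ℝ satisfy hypothesis (H), let t > 0, let U_t be the even solution with U_t(0) = t and r_t its smallest positive zero, and let H_t be the even C² solution on (−π,π) of the linearized equation H'' + (cot ρ)·H' + f'(U_t)·H = 0 (away from ρ = 0) with H_t(0) = 1. Then H_t(ρ) > 0 for every ρ ∈ (−r_t, r_t). -/
open Real Set

theorem sol_derivs (U : ℝ → ℝ) (h : ContDiffOn ℝ 2 U (Set.Ioo (-Real.pi) Real.pi))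
    (x : ℝ) (hx : x ∈ Set.Ioo (-Real.pi) Real.pi) :
    HasDerivAt U (deriv U x) x ∧ HasDerivAt (deriv U) (deriv (deriv U) x) x := by
  have h1 : ContDiffOn ℝ 1 (deriv U) (Set.Ioo (-Real.pi) Real.pi) :=
    h.deriv_of_isOpen isOpen_Ioo (by norm_num)
  have hn := isOpen_Ioo.mem_nhds hx
  exact ⟨((h.differentiableOn (by norm_num)).differentiableAt hn).hasDerivAt,
    ((h1.differentiableOn (by norm_num)).differentiableAt hn).hasDerivAt⟩

/-- Under hypothesis (H) (`f` is `C¹`, `f > 0` and `f(x) ≥ x f'(x)` on `(0,∞)`), the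
solution `H_t` of the linearized equation with `H_t(0) = 1` is positive on `(-r_t, r_t)`. -/
theorem stmt6 (f : ℝ → ℝ) (hf : ContDiff ℝ 1 f)
    (hH : ∀ x > (0:ℝ), 0 < f x ∧ x * deriv f x ≤ f x)
    (t : ℝ) (ht : 0 < t) (U : ℝ → ℝ) (hU : IsEvenSol f U) (hU0 : U 0 = t)
    (r : ℝ) (hr : r ∈ Set.Ioo 0 Real.pi) (hUr : U r = 0)
    (hrmin : ∀ ρ ∈ Set.Ioo 0 r, U ρ ≠ 0)
    (Ht : ℝ → ℝ)
    (hHte : ∀ ρ ∈ Set.Ioo (-Real.pi) Real.pi, Ht (-ρ) = Ht ρ)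
    (hHtc : ContDiffOn ℝ 2 Ht (Set.Ioo (-Real.pi) Real.pi))
    (hHt0 : Ht 0 = 1)
    (hHtode : ∀ ρ ∈ Set.Ioo (-Real.pi) Real.pi, ρ ≠ 0 →
      deriv (deriv Ht) ρ + (Real.cos ρ / Real.sin ρ) * deriv Ht ρ
        + deriv f (U ρ) * Ht ρ = 0) :
    ∀ ρ ∈ Set.Ioo (-r) r, 0 < Ht ρ := by
  obtain ⟨-, hUc, hUode⟩ := hU
  obtain ⟨hr0, hrpi⟩ := hr
  have dU := sol_derivs U hUc
  have dH := sol_derivs Ht hHtc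
  have mem : ∀ x, 0 ≤ x → x ≤ r → x ∈ Set.Ioo (-Real.pi) Real.pi := fun x h0 h1 =>
    ⟨by linarith, by linarith⟩
  have hUpos : ∀ x, 0 ≤ x → x < r → 0 < U x := by
    intro x h0 h1
    by_contra hneg
    push Not at hneg
    have hc : ContinuousOn U (Icc 0 x) := fun y hy =>
      (dU y (mem y hy.1 (by linarith [hy.2]))).1.continuousAt.continuousWithinAt
    obtain ⟨y, hy, hy0⟩ := intermediate_value_Icc' h0 hc ⟨hneg, by rw [hU0]; exact ht.le⟩
    have hyne : y ≠ 0 := by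
      rintro rfl
      linarith
    exact hrmin y ⟨lt_of_le_of_ne hy.1 (Ne.symm hyne), by linarith [hy.2]⟩ hy0
  have key : ∀ x, 0 ≤ x → x < r → 0 < Ht x := by
    intro x hx0 hxr
    by_contra hneg
    push Not at hneg
    have hcx : ContinuousOn Ht (Icc 0 x) := fun y hy =>
      (dH y (mem y hy.1 (by linarith [hy.2]))).1.continuousAt.continuousWithinAt
    have hK : IsCompact (Icc 0 x ∩ Ht ⁻¹' Iic 0) :=
      isCompact_Icc.of_isClosed_subset
        (hcx.preimage_isClosed_of_isClosed isClosed_Icc isClosed_Iic) inter_subset_left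
    obtain ⟨a, ⟨⟨ha0, hax⟩, haH⟩, hamin⟩ := hK.exists_isLeast ⟨x, ⟨hx0, le_rfl⟩, hneg⟩
    have haH' : Ht a ≤ 0 := haH
    have har : a < r := lt_of_le_of_lt hax hxr
    have hHpos : ∀ y, 0 ≤ y → y < a → 0 < Ht y := by
      intro y hy0 hya
      by_contra hc
      push Not at hc
      exact absurd (hamin ⟨⟨hy0, by linarith⟩, hc⟩) (not_le.mpr hya)
    have hW : ∀ y, 0 ≤ y → y ≤ a →
        HasDerivAt (fun z => Real.sin z * (U z * deriv Ht z - deriv U z * Ht z))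
          (Real.cos y * (U y * deriv Ht y - deriv U y * Ht y) + Real.sin y *
            ((deriv U y * deriv Ht y + U y * deriv (deriv Ht) y)
              - (deriv (deriv U) y * Ht y + deriv U y * deriv Ht y))) y := by
      intro y h0 h1
      have hm := mem y h0 (by linarith)
      exact (Real.hasDerivAt_sin y).mul
        (((dU y hm).1.mul (dH y hm).2).sub ((dU y hm).2.mul (dH y hm).1))
    have hsin : ∀ y, 0 < y → y ≤ a → 0 < Real.sin y := fun y h0 h1 =>
      Real.sin_pos_of_pos_of_lt_pi h0 (by linarith)
    have hWmono : MonotoneOn (fun z => Real.sin z * (U z * deriv Ht z - deriv U z * Ht z))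
        (Icc 0 a) := by
      apply monotoneOn_of_deriv_nonneg (convex_Icc 0 a)
      · exact fun y hy => (hW y hy.1 hy.2).continuousAt.continuousWithinAt
      · intro y hy
        rw [interior_Icc] at hy
        exact (hW y hy.1.le hy.2.le).differentiableAt.differentiableWithinAt
      · intro y hy
        rw [interior_Icc] at hy
        rw [(hW y hy.1.le hy.2.le).deriv]
        have hm := mem y hy.1.le (by linarith [hy.2])
        have e1 := hUode y hm hy.1.ne'
        have e2 := hHtode y hm hy.1.ne'
        have hs := hsin y hy.1 hy.2.le
        have hu := hUpos y hy.1.le (by linarith [hy.2])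
        have hq := (hH _ hu).2
        have hh := hHpos y hy.1.le hy.2
        have e1' : Real.sin y * deriv (deriv U) y =
            - Real.cos y * deriv U y - Real.sin y * f (U y) := by
          field_simp at e1
          linarith
        have e2' : Real.sin y * deriv (deriv Ht) y =
            - Real.cos y * deriv Ht y - Real.sin y * (deriv f (U y) * Ht y) := by
          field_simp at e2
          linarith
        have e : Real.cos y * (U y * deriv Ht y - deriv U y * Ht y) + Real.sin y *
            ((deriv U y * deriv Ht y + U y * deriv (deriv Ht) y)
              - (deriv (deriv U) y * Ht y + deriv U y * deriv Ht y))
            = Real.sin y * Ht y * (f (U y) - U y * deriv f (U y)) := by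
          linear_combination U y * e2' - Ht y * e1'
        rw [e]
        exact mul_nonneg (mul_pos hs hh).le (by linarith)
    have hQ : ∀ y, 0 ≤ y → y ≤ a → HasDerivAt (fun z => Ht z / U z)
        ((deriv Ht y * U y - Ht y * deriv U y) / U y ^ 2) y := by
      intro y h0 h1
      have hm := mem y h0 (by linarith)
      exact (dH y hm).1.div (dU y hm).1 (hUpos y h0 (by linarith)).ne'
    have hQmono : MonotoneOn (fun z => Ht z / U z) (Icc 0 a) := by
      apply monotoneOn_of_deriv_nonneg (convex_Icc 0 a)
      · exact fun y hy => (hQ y hy.1 hy.2).continuousAt.continuousWithinAt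
      · intro y hy
        rw [interior_Icc] at hy
        exact (hQ y hy.1.le hy.2.le).differentiableAt.differentiableWithinAt
      · intro y hy
        rw [interior_Icc] at hy
        rw [(hQ y hy.1.le hy.2.le).deriv]
        have h := hWmono ⟨le_rfl, ha0⟩ ⟨hy.1.le, hy.2.le⟩ hy.1.le
        simp only [Real.sin_zero, zero_mul] at h
        have h2 := nonneg_of_mul_nonneg_right h (hsin y hy.1 hy.2.le)
        exact div_nonneg (by linarith) (sq_nonneg _)
    have h := hQmono ⟨le_rfl, ha0⟩ ⟨ha0, le_rfl⟩ ha0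
    simp only [hHt0, hU0] at h
    have h3 : Ht a / U a ≤ 0 := div_nonpos_of_nonpos_of_nonneg haH' (hUpos a ha0 har).le
    have h4 : 0 < 1 / t := by positivity
    linarith
  intro ρ hρ
  rcases le_total 0 ρ with h | h
  · exact key ρ h hρ.2
  · have := key (-ρ) (by linarith) (by linarith [hρ.1])
    rwa [hHte ρ ⟨by linarith [hρ.1], by linarith [hρ.2]⟩] at this
end

section
/- Let f: ℝ → ℝ satisfy hypothesis (H). Let (t_n) be a sequence of positive reals with t_n → +∞ and let ρ_n ∈ [0, r_{t_n}] for each n. Then U_{t_n}(ρ_n)² + U_{t_n}'(ρ_n)² → +∞; more precisely, max( U_{t_n}(ρ_n), −U_{t_n}'(ρ_n) ) → +∞. -/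
open Real Set Filter

lemma aux_bound (f : ℝ → ℝ) (hf : ContDiff ℝ 1 f)
    (hH : ∀ x > (0:ℝ), 0 < f x ∧ x * deriv f x ≤ f x) :
    ∃ A > (0:ℝ), ∀ t ≥ (1:ℝ), ∀ x ∈ Icc 0 t, f x ≤ A * t := by
  have hd : Differentiable ℝ f := hf.differentiable (by norm_num)
  obtain ⟨M, hM⟩ := (isCompact_Icc (a := (0:ℝ)) (b := 1)).bddAbove_image hf.continuous.continuousOn
  have hM' : ∀ x ∈ Icc (0:ℝ) 1, f x ≤ M := fun x hx => hM (mem_image_of_mem f hx)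
  have h1 : f 1 ≤ M := hM' 1 (by simp)
  have hMpos : 0 < M := lt_of_lt_of_le (hH 1 one_pos).1 h1
  have hanti : AntitoneOn (fun x => f x / x) (Ici 1) := by
    have hder : ∀ x ∈ Ici (1:ℝ), HasDerivAt (fun x => f x / x) ((deriv f x * x - f x * 1) / x ^ 2) x := by
      intro x hx
      have hx0 : x ≠ 0 := by have : (1:ℝ) ≤ x := hx
                             positivity
      exact (hd x).hasDerivAt.div (hasDerivAt_id x) hx0
    apply antitoneOn_of_deriv_nonpos (convex_Ici 1)
    · exact fun x hx => (hder x hx).continuousAt.continuousWithinAt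
    · exact fun x hx => (hder x (interior_subset hx)).differentiableAt.differentiableWithinAt
    · intro x hx
      have hx := interior_subset hx
      rw [(hder x hx).deriv]
      have hx1 : (1:ℝ) ≤ x := hx
      have := (hH x (by linarith)).2
      apply div_nonpos_of_nonpos_of_nonneg
      · linarith
      · positivity
  refine ⟨M, hMpos, fun t ht x hx => ?_⟩
  rcases le_total x 1 with h | h
  · have := hM' x ⟨hx.1, h⟩
    nlinarith
  · have := hanti (mem_Ici.2 le_rfl) (mem_Ici.2 h) h
    simp only [div_one] at this
    rw [div_le_iff₀ (by linarith)] at this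
    nlinarith [hx.2]

lemma aux_main (f : ℝ → ℝ) (hf : ContDiff ℝ 1 f)
    (hH : ∀ x > (0:ℝ), 0 < f x ∧ x * deriv f x ≤ f x)
    (A : ℝ) (hA : 0 < A) (t : ℝ) (ht : 1 ≤ t) (hAf : ∀ x ∈ Icc 0 t, f x ≤ A * t)
    (U : ℝ → ℝ) (hU : IsEvenSol f U) (hU0 : U 0 = t) (r : ℝ) (hr : r ∈ Ioo 0 π)
    (hUr : U r = 0) (hne : ∀ ρ ∈ Ioo 0 r, U ρ ≠ 0) (ρ : ℝ) (hρ : ρ ∈ Icc 0 r)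
    (δ : ℝ) (hδ : 0 < δ) (hδ1 : δ ≤ 1) (hδA : A * δ ≤ 1 / 2) :
    t / (2 * (1 + π / sin δ)) ≤ max (U ρ) (-(deriv U ρ)) := by
  obtain ⟨-, hC, hode⟩ := hU
  have hpi := Real.pi_gt_three
  have hopen : IsOpen (Ioo (-π) π) := isOpen_Ioo
  have hsub : ∀ x ∈ Icc 0 r, x ∈ Ioo (-π) π := fun x hx => ⟨by linarith [hx.1], by linarith [hx.2, hr.2]⟩
  have hd : ∀ x ∈ Icc 0 r, HasDerivAt U (deriv U x) x := fun x hx =>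
    ((hC.differentiableOn (by norm_num)).differentiableAt (hopen.mem_nhds (hsub x hx))).hasDerivAt
  have hC' : ContDiffOn ℝ 1 (deriv U) (Ioo (-π) π) :=
    ((contDiffOn_succ_iff_deriv_of_isOpen (n := 1) hopen).1 (by simpa [one_add_one_eq_two] using hC)).2.2
  have hdd : ∀ x ∈ Icc 0 r, HasDerivAt (deriv U) (deriv (deriv U) x) x := fun x hx =>
    ((hC'.differentiableOn (by norm_num)).differentiableAt (hopen.mem_nhds (hsub x hx))).hasDerivAt
  have hcU : ContinuousOn U (Icc 0 r) := fun x hx => (hd x hx).continuousAt.continuousWithinAt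
  have hsin : ∀ x ∈ Ioc 0 r, 0 < sin x := fun x hx => sin_pos_of_pos_of_lt_pi hx.1 (by linarith [hx.2, hr.2])
  -- positivity
  have hpos : ∀ x ∈ Ico 0 r, 0 < U x := by
    intro x hx
    by_contra hcon
    push Not at hcon
    obtain ⟨y, hy, hy0⟩ := intermediate_value_Icc' hx.1 (hcU.mono (Icc_subset_Icc_right hx.2.le))
      (show (0:ℝ) ∈ Icc (U x) (U 0) from ⟨hcon, by linarith⟩)
    rcases eq_or_lt_of_le hy.1 with h | h
    · rw [← h] at hy0; linarith
    · exact hne y ⟨h, lt_of_le_of_lt hy.2 hx.2⟩ hy0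
  have hWd : ∀ x ∈ Ioo 0 r, HasDerivAt (fun x => sin x * deriv U x) (-(sin x * f (U x))) x := by
    intro x hx
    have hx' : x ∈ Icc 0 r := Ioo_subset_Icc_self hx
    have h := (hasDerivAt_sin x).mul (hdd x hx')
    have ho := hode x (hsub x hx') hx.1.ne'
    have hs := (hsin x ⟨hx.1, hx.2.le⟩).ne'
    have : sin x * (deriv (deriv U) x + cos x / sin x * deriv U x + f (U x)) = 0 := by rw [ho, mul_zero]
    field_simp at this
    have e : -(sin x * f (U x)) = cos x * deriv U x + sin x * deriv (deriv U) x := by linarith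
    rw [e]
    exact h
  have hWc : ContinuousOn (fun x => sin x * deriv U x) (Icc 0 r) := fun x hx =>
    ((hasDerivAt_sin x).mul (hdd x hx)).continuousAt.continuousWithinAt
  have hWanti : AntitoneOn (fun x => sin x * deriv U x) (Icc 0 r) := by
    apply antitoneOn_of_deriv_nonpos (convex_Icc 0 r) hWc
    · rw [interior_Icc]
      exact fun x hx => (hWd x hx).differentiableAt.differentiableWithinAt
    · rw [interior_Icc]
      intro x hx
      rw [(hWd x hx).deriv]
      have h1 := hsin x ⟨hx.1, hx.2.le⟩
      have h2 := (hH _ (hpos x ⟨hx.1.le, hx.2⟩)).1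
      have := mul_pos h1 h2
      linarith
  have hr0 : (0:ℝ) ∈ Icc 0 r := ⟨le_rfl, hr.1.le⟩
  have hV : ∀ x ∈ Ioc 0 r, deriv U x ≤ 0 := by
    intro x hx
    have h := hWanti hr0 ⟨hx.1.le, hx.2⟩ hx.1.le
    simp only [sin_zero, zero_mul] at h
    have := hsin x hx
    by_contra hcon
    push Not at hcon
    have := mul_pos this hcon
    linarith
  have hUanti : AntitoneOn U (Icc 0 r) := by
    apply antitoneOn_of_deriv_nonpos (convex_Icc 0 r) hcU
    · rw [interior_Icc]
      exact fun x hx => (hd x (Ioo_subset_Icc_self hx)).differentiableAt.differentiableWithinAt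
    · rw [interior_Icc]
      exact fun x hx => hV x ⟨hx.1, hx.2.le⟩
  have hUt : ∀ x ∈ Icc 0 r, U x ≤ t := fun x hx => hU0 ▸ hUanti hr0 hx hx.1
  -- lower bound on sin * U'
  have hGmono : MonotoneOn (fun x => A * t * (1 - cos x) + sin x * deriv U x) (Icc 0 r) := by
    have hGd : ∀ x ∈ Ioo 0 r, HasDerivAt (fun x => A * t * (1 - cos x) + sin x * deriv U x)
        (A * t * sin x + -(sin x * f (U x))) x := by
      intro x hx
      have h1 : HasDerivAt (fun x => A * t * (1 - cos x)) (A * t * sin x) x := by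
        simpa using ((hasDerivAt_cos x).const_sub 1).const_mul (A * t)
      exact h1.add (hWd x hx)
    apply monotoneOn_of_deriv_nonneg (convex_Icc 0 r)
    · exact ContinuousOn.add (by fun_prop) hWc
    · rw [interior_Icc]
      exact fun x hx => (hGd x hx).differentiableAt.differentiableWithinAt
    · rw [interior_Icc]
      intro x hx
      rw [(hGd x hx).deriv]
      have h1 := hsin x ⟨hx.1, hx.2.le⟩
      have h2 := hAf (U x) ⟨(hpos x ⟨hx.1.le, hx.2⟩).le, hUt x (Ioo_subset_Icc_self hx)⟩
      nlinarith
  have hVle : ∀ x ∈ Ioc 0 r, x ≤ 1 → -(A * t) ≤ deriv U x := by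
    intro x hx hx1
    have h := hGmono hr0 ⟨hx.1.le, hx.2⟩ hx.1.le
    simp only [cos_zero, sin_zero, sub_self, zero_mul, mul_zero, add_zero] at h
    have hs := hsin x hx
    have hc : 0 < cos x := cos_pos_of_mem_Ioo ⟨by linarith [hx.1], by linarith⟩
    have hsc : 1 - cos x ≤ sin x := by nlinarith [sin_sq_add_cos_sq x, mul_pos hs hc]
    have hAt : 0 < A * t := by positivity
    have h3 : 0 ≤ sin x * (A * t + deriv U x) := by nlinarith
    have := nonneg_of_mul_nonneg_right h3 hs
    linarith
  have hsmall : ∀ x ∈ Icc 0 r, x ≤ δ → t / 2 ≤ U x := by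
    intro x hx hxδ
    have h := (convex_Icc 0 x).mul_sub_le_image_sub_of_le_deriv (f := U) (C := -(A * t))
      (hcU.mono (Icc_subset_Icc_right hx.2))
      (by rw [interior_Icc]
          exact fun y hy => (hd y ⟨hy.1.le, hy.2.le.trans hx.2⟩).differentiableAt.differentiableWithinAt)
      (by rw [interior_Icc]
          exact fun y hy => hVle y ⟨hy.1, hy.2.le.trans hx.2⟩ (by linarith [hy.2]))
      0 ⟨le_rfl, hx.1⟩ x ⟨hx.1, le_rfl⟩ hx.1
    rw [hU0] at h
    have h1 : A * x ≤ 1 / 2 := by nlinarith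
    nlinarith
  have hsδ : 0 < sin δ := sin_pos_of_pos_of_lt_pi hδ (by linarith)
  have hq : 0 < π / sin δ := by positivity
  have hden : 0 < 2 * (1 + π / sin δ) := by positivity
  set m := max (U ρ) (-(deriv U ρ)) with hm
  have hm1 : U ρ ≤ m := le_max_left _ _
  have hm2 : -(deriv U ρ) ≤ m := le_max_right _ _
  rw [div_le_iff₀ hden]
  rcases le_or_gt ρ δ with hρδ | hρδ
  · have := hsmall ρ hρ hρδ
    nlinarith
  have hρ0 : ρ ∈ Ioc 0 r := ⟨by linarith, hρ.2⟩
  have hm0 : 0 ≤ m := by linarith [hV ρ hρ0]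
  have hbd : ∀ x ∈ Ioo δ ρ, -(m / sin δ) ≤ deriv U x := by
    intro x hx
    have hx0 : x ∈ Ioc 0 r := ⟨by linarith [hx.1], by linarith [hx.2, hρ.2]⟩
    have h := hWanti (Ioc_subset_Icc_self hx0) hρ hx.2.le
    simp only at h
    have hsx := hsin x hx0
    have hsρ := hsin ρ hρ0
    -- sin ρ * sin δ ≤ sin x
    have hkey : sin ρ * sin δ ≤ sin x := by
      have hconc := strictConcaveOn_sin_Icc.concaveOn
      have hmin := hconc.min_le_of_mem_Icc (x := δ) (y := ρ) (z := x)
        ⟨hδ.le, by linarith⟩ ⟨hρ.1, by linarith [hρ.2, hr.2]⟩ ⟨hx.1.le, hx.2.le⟩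
      rcases min_le_iff.1 hmin with h | h
      · nlinarith [sin_le_one ρ]
      · nlinarith [sin_le_one δ]
    rw [← neg_div, div_le_iff₀ hsδ]
    -- sin x * (-U' x) ≤ sin ρ * m
    have h4 : sin x * (-(deriv U x)) ≤ sin ρ * m := by nlinarith
    have h5 : sin x * (-(deriv U x) * sin δ) ≤ sin x * m := by
      calc sin x * (-(deriv U x) * sin δ) = (sin x * (-(deriv U x))) * sin δ := by ring
        _ ≤ (sin ρ * m) * sin δ := by gcongr
        _ = (sin ρ * sin δ) * m := by ring
        _ ≤ sin x * m := by gcongr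
    have := le_of_mul_le_mul_left h5 hsx
    linarith
  have hδr : δ ∈ Icc 0 r := ⟨hδ.le, by linarith [hρ.2]⟩
  have h := (convex_Icc δ ρ).mul_sub_le_image_sub_of_le_deriv (f := U) (C := -(m / sin δ))
      (hcU.mono (Icc_subset_Icc hδ.le hρ.2))
      (by rw [interior_Icc]
          exact fun y hy => (hd y ⟨by linarith [hy.1], by linarith [hy.2, hρ.2]⟩).differentiableAt.differentiableWithinAt)
      (by rw [interior_Icc]
          exact hbd)
      δ ⟨le_rfl, hρδ.le⟩ ρ ⟨hρδ.le, le_rfl⟩ hρδ.le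
  have h6 := hsmall δ hδr le_rfl
  have h7 : m / sin δ * (ρ - δ) ≤ m / sin δ * π := by
    have : 0 ≤ m / sin δ := by positivity
    apply mul_le_mul_of_nonneg_left _ this
    linarith [hρ.2, hr.2]
  have h8 : m * (π / sin δ) = m / sin δ * π := by ring
  nlinarith

theorem stmt7 (f : ℝ → ℝ) (hf : ContDiff ℝ 1 f)
    (hH : ∀ x > (0:ℝ), 0 < f x ∧ x * deriv f x ≤ f x)
    (t : ℕ → ℝ) (ht : ∀ n, 0 < t n)
    (htinf : Filter.Tendsto t Filter.atTop Filter.atTop)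
    (U : ℕ → ℝ → ℝ) (r : ℕ → ℝ)
    (hU : ∀ n, IsEvenSol f (U n) ∧ U n 0 = t n)
    (hr : ∀ n, r n ∈ Set.Ioo 0 Real.pi ∧ U n (r n) = 0 ∧
      ∀ ρ ∈ Set.Ioo 0 (r n), U n ρ ≠ 0)
    (ρ : ℕ → ℝ) (hρ : ∀ n, ρ n ∈ Set.Icc 0 (r n)) :
    Filter.Tendsto (fun n => (U n (ρ n)) ^ 2 + (deriv (U n) (ρ n)) ^ 2)
      Filter.atTop Filter.atTop ∧
    Filter.Tendsto (fun n => max (U n (ρ n)) (-(deriv (U n) (ρ n))))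
      Filter.atTop Filter.atTop := by
  obtain ⟨A, hA, hAf⟩ := aux_bound f hf hH
  have hpi := Real.pi_gt_three
  set δ : ℝ := min 1 (1 / (2 * A)) with hδdef
  have hδ : 0 < δ := by positivity
  have hδ1 : δ ≤ 1 := min_le_left _ _
  have hδA : A * δ ≤ 1 / 2 := by
    calc A * δ ≤ A * (1 / (2 * A)) := by gcongr; exact min_le_right _ _
      _ = 1 / 2 := by field_simp
  have hsδ : 0 < sin δ := sin_pos_of_pos_of_lt_pi hδ (by linarith)
  have hmax : Filter.Tendsto (fun n => max (U n (ρ n)) (-(deriv (U n) (ρ n))))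
      Filter.atTop Filter.atTop := by
    refine tendsto_atTop_mono' atTop ?_
      (htinf.atTop_div_const (show 0 < 2 * (1 + π / sin δ) by positivity))
    filter_upwards [htinf.eventually_ge_atTop 1] with n hn
    exact aux_main f hf hH A hA (t n) hn (hAf (t n) hn) (U n) (hU n).1 (hU n).2 (r n) (hr n).1
      (hr n).2.1 (hr n).2.2 (ρ n) (hρ n) δ hδ hδ1 hδA
  refine ⟨?_, hmax⟩
  refine tendsto_atTop_mono' atTop ?_ hmax
  filter_upwards [hmax.eventually_ge_atTop 1] with n hn
  rcases max_choice (U n (ρ n)) (-(deriv (U n) (ρ n))) with h | h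
  · rw [h] at hn ⊢
    nlinarith [sq_nonneg (deriv (U n) (ρ n))]
  · rw [h] at hn ⊢
    nlinarith [sq_nonneg (U n (ρ n))]
end

section
/- Let f: ℝ → ℝ satisfy hypothesis (H) and let t > 0. Let U_t be the even solution with U_t(0) = t, r_t its smallest positive zero, and H_t the even C² solution of the linearized equation H'' + (cot ρ)·H' + f'(U_t)·H = 0 (away from ρ = 0) with H_t(0) = 1. Then H_t(ρ)·U_t''(ρ) − U_t'(ρ)·H_t'(ρ) ≠ 0 for every ρ ∈ [−r_t, r_t]. -/
open Real Set

lemma aux_parity (g : ℝ → ℝ) (e : ℝ)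
    (h : ∀ x ∈ Set.Ioo (-Real.pi) Real.pi, g (-x) = e * g x) :
    ∀ x ∈ Set.Ioo (-Real.pi) Real.pi, deriv g (-x) = (-e) * deriv g x := by
  intro x hx
  have h1 : (fun y => g (-y)) =ᶠ[nhds x] fun y => e * g y :=
    Filter.eventually_of_mem (isOpen_Ioo.mem_nhds hx) h
  have h2 := h1.deriv_eq
  rw [deriv_comp_neg, deriv_const_mul_field] at h2
  linarith

lemma aux_reg (g : ℝ → ℝ) (h : ContDiffOn ℝ 2 g (Set.Ioo (-Real.pi) Real.pi)) :
    ∀ x ∈ Set.Ioo (-Real.pi) Real.pi, HasDerivAt g (deriv g x) x ∧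
      HasDerivAt (deriv g) (deriv (deriv g) x) x ∧ ContinuousAt (deriv (deriv g)) x := by
  intro x hx
  have h1 : ContDiffOn ℝ (1+1) g (Set.Ioo (-Real.pi) Real.pi) := by
    convert h using 1; norm_num
  have h2 := (contDiffOn_succ_iff_deriv_of_isOpen isOpen_Ioo).1 h1
  have h3 : ContDiffOn ℝ (0+1) (deriv g) (Set.Ioo (-Real.pi) Real.pi) := by
    rw [zero_add]; exact h2.2.2
  have h4 := (contDiffOn_succ_iff_deriv_of_isOpen isOpen_Ioo).1 h3
  have hn := isOpen_Ioo.mem_nhds hx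
  exact ⟨(h2.1.differentiableAt hn).hasDerivAt, (h4.1.differentiableAt hn).hasDerivAt,
    h4.2.2.continuousOn.continuousAt hn⟩

/-- value of the second derivative at the origin -/
lemma aux_zero (g c : ℝ → ℝ) (a : ℝ) (h : HasDerivAt g a 0) (g0 : g 0 = 0)
    (hc : ContinuousAt (deriv g) 0) (ha : deriv g 0 = a) (hcc : ContinuousAt c 0)
    (hode : ∀ x ∈ Set.Ioo (0:ℝ) Real.pi, deriv g x + (Real.cos x / Real.sin x) * g x + c x = 0) :
    2 * a + c 0 = 0 := by
  have le : nhdsWithin (0:ℝ) (Set.Ioi 0) ≤ nhdsWithin (0:ℝ) {0}ᶜ :=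
    nhdsWithin_mono _ (fun x hx => (ne_of_gt hx : x ≠ 0))
  have h1 := (hasDerivAt_iff_tendsto_slope.1 h).mono_left le
  have h2 := (hasDerivAt_iff_tendsto_slope.1 (Real.hasDerivAt_sin 0)).mono_left le
  have h3 := (h1.div h2 (by simp)).mul (Real.continuous_cos.continuousAt.tendsto.mono_left
    (nhdsWithin_le_nhds (s := Set.Ioi (0:ℝ)) (a := (0:ℝ))))
  have h4 := ((hc.tendsto.mono_left (nhdsWithin_le_nhds (s := Set.Ioi (0:ℝ)))).add h3).add
    (hcc.tendsto.mono_left (nhdsWithin_le_nhds (s := Set.Ioi (0:ℝ))))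
  have h5 : Filter.Tendsto (fun _ : ℝ => (0:ℝ)) (nhdsWithin 0 (Set.Ioi 0)) (nhds 0) :=
    tendsto_const_nhds
  have h6 := tendsto_nhds_unique_of_eventuallyEq h4 h5 (by
    filter_upwards [Ioo_mem_nhdsGT Real.pi_pos] with x hx
    have := hode x hx
    have hs := Real.sin_pos_of_pos_of_lt_pi hx.1 hx.2
    have hx0 := hx.1.ne'
    refine Eq.trans ?_ this
    simp only [slope_def_field, g0, Pi.div_apply, Real.sin_zero, sub_zero]
    field_simp)
  simp [ha] at h6
  linarith

/-- Under hypothesis (H), for `t > 0` the Wronskian-type quantity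
`H_t U_t'' - U_t' H_t'` never vanishes on `[-r_t, r_t]`. -/
theorem stmt8 (f : ℝ → ℝ) (hf : ContDiff ℝ 1 f)
    (hH : ∀ x > (0:ℝ), 0 < f x ∧ x * deriv f x ≤ f x)
    (t : ℝ) (ht : 0 < t) (U : ℝ → ℝ) (hU : IsEvenSol f U) (hU0 : U 0 = t)
    (r : ℝ) (hr : r ∈ Set.Ioo 0 Real.pi) (hUr : U r = 0)
    (hrmin : ∀ ρ ∈ Set.Ioo 0 r, U ρ ≠ 0)
    (Ht : ℝ → ℝ)
    (hHte : ∀ ρ ∈ Set.Ioo (-Real.pi) Real.pi, Ht (-ρ) = Ht ρ)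
    (hHtc : ContDiffOn ℝ 2 Ht (Set.Ioo (-Real.pi) Real.pi))
    (hHt0 : Ht 0 = 1)
    (hHtode : ∀ ρ ∈ Set.Ioo (-Real.pi) Real.pi, ρ ≠ 0 →
      deriv (deriv Ht) ρ + (Real.cos ρ / Real.sin ρ) * deriv Ht ρ
        + deriv f (U ρ) * Ht ρ = 0) :
    ∀ ρ ∈ Set.Icc (-r) r,
      Ht ρ * deriv (deriv U) ρ - deriv U ρ * deriv Ht ρ ≠ 0 := by
  obtain ⟨hUe, hUc, hUode⟩ := hU
  obtain ⟨hr0, hrpi⟩ := hr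
  have pp := Real.pi_pos
  have UR := aux_reg U hUc
  have HR := aux_reg Ht hHtc
  have Up := aux_parity U 1 (by simpa using hUe)
  have Upp := aux_parity (deriv U) (-1) Up
  have Hp := aux_parity Ht 1 (by simpa using hHte)
  have m0 : (0:ℝ) ∈ Set.Ioo (-Real.pi) Real.pi := ⟨by linarith, pp⟩
  have U'0 : deriv U 0 = 0 := by have := Up 0 m0; simp at this; linarith
  have H'0 : deriv Ht 0 = 0 := by have := Hp 0 m0; simp at this; linarith
  have memI : ∀ x ∈ Set.Icc 0 r, x ∈ Set.Ioo (-Real.pi) Real.pi := fun x hx =>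
    ⟨by linarith [hx.1], by linarith [hx.2]⟩
  have spos : ∀ x ∈ Set.Ioc 0 r, 0 < Real.sin x := fun x hx =>
    Real.sin_pos_of_pos_of_lt_pi hx.1 (by linarith [hx.2])
  have ode1 : ∀ x ∈ Set.Ioc 0 r, Real.sin x * deriv (deriv U) x =
      - Real.cos x * deriv U x - Real.sin x * f (U x) := by
    intro x hx
    have h := hUode x (memI x ⟨hx.1.le, hx.2⟩) hx.1.ne'
    have hs := (spos x hx).ne'
    field_simp at h
    linarith
  have ode2 : ∀ x ∈ Set.Ioc 0 r, Real.sin x * deriv (deriv Ht) x =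
      - Real.cos x * deriv Ht x - Real.sin x * (deriv f (U x) * Ht x) := by
    intro x hx
    have h := hHtode x (memI x ⟨hx.1.le, hx.2⟩) hx.1.ne'
    have hs := (spos x hx).ne'
    field_simp at h
    linarith
  have Ucont : ContinuousOn U (Set.Icc 0 r) := fun x hx =>
    (UR x (memI x hx)).1.continuousAt.continuousWithinAt
  have Hcont : ContinuousOn Ht (Set.Icc 0 r) := fun x hx =>
    (HR x (memI x hx)).1.continuousAt.continuousWithinAt
  have fd : ∀ x ∈ Set.Icc 0 r, HasDerivAt (fun y => f (U y)) (deriv f (U x) * deriv U x) x :=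
    fun x hx => HasDerivAt.comp x ((hf.differentiable (by norm_num)) (U x)).hasDerivAt
      (UR x (memI x hx)).1
  -- positivity of U
  have Upos : ∀ x ∈ Set.Ico 0 r, 0 < U x := by
    intro x hx
    by_contra hneg
    push Not at hneg
    have hc : ContinuousOn U (Set.Icc 0 x) := Ucont.mono (Set.Icc_subset_Icc_right hx.2.le)
    obtain ⟨y, hy, hy0⟩ := intermediate_value_Icc' hx.1 hc ⟨hneg, by rw [hU0]; exact ht.le⟩
    have hy1 : y ≠ 0 := by rintro rfl; linarith
    exact hrmin y ⟨lt_of_le_of_ne hy.1 hy1.symm, lt_of_le_of_lt hy.2 hx.2⟩ hy0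
  -- U' negative
  have U'neg : ∀ x ∈ Set.Ioc 0 r, deriv U x < 0 := by
    have hd : ∀ x ∈ Set.Icc 0 r, HasDerivAt (fun y => Real.sin y * deriv U y)
        (Real.cos x * deriv U x + Real.sin x * deriv (deriv U) x) x := fun x hx =>
      (Real.hasDerivAt_sin x).mul (UR x (memI x hx)).2.1
    have anti : StrictAntiOn (fun y => Real.sin y * deriv U y) (Set.Icc 0 r) := by
      apply strictAntiOn_of_deriv_neg (convex_Icc 0 r)
        (fun x hx => (hd x hx).continuousAt.continuousWithinAt)
      intro x hx
      rw [interior_Icc] at hx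
      rw [(hd x ⟨hx.1.le, hx.2.le⟩).deriv, ode1 x ⟨hx.1, hx.2.le⟩]
      have := mul_pos (spos x ⟨hx.1, hx.2.le⟩) (hH _ (Upos x ⟨hx.1.le, hx.2⟩)).1
      linarith
    intro x hx
    have h := anti ⟨le_rfl, hr0.le⟩ ⟨hx.1.le, hx.2⟩ hx.1
    simp only [Real.sin_zero, zero_mul] at h
    by_contra hn
    push Not at hn
    exact absurd h (not_lt.2 (mul_nonneg (spos x hx).le hn))
  -- positivity of Ht
  have Hpos : ∀ x ∈ Set.Ico 0 r, 0 < Ht x := by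
    intro x hx
    by_contra hneg
    push Not at hneg
    have hc : ContinuousOn Ht (Set.Icc 0 x) := Hcont.mono (Set.Icc_subset_Icc_right hx.2.le)
    have hcl : IsCompact (Set.Icc 0 x ∩ Ht ⁻¹' {0}) :=
      isCompact_Icc.of_isClosed_subset (hc.preimage_isClosed_of_isClosed isClosed_Icc
        isClosed_singleton) Set.inter_subset_left
    have hne : (Set.Icc 0 x ∩ Ht ⁻¹' {0}).Nonempty := by
      obtain ⟨y, hy, hy0⟩ := intermediate_value_Icc' hx.1 hc ⟨hneg, by rw [hHt0]; norm_num⟩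
      exact ⟨y, hy, hy0⟩
    obtain ⟨s, ⟨hs, hs0⟩, hmin⟩ := hcl.exists_isLeast hne
    replace hs0 : Ht s = 0 := hs0
    have hs1 : 0 < s := lt_of_le_of_ne hs.1 (by rintro rfl; linarith)
    have hsr : s < r := lt_of_le_of_lt hs.2 hx.2
    have Hp1 : ∀ y ∈ Set.Ico 0 s, 0 < Ht y := by
      intro y hy
      by_contra hn
      push Not at hn
      obtain ⟨z, hz, hz0⟩ := intermediate_value_Icc' hy.1
        (hc.mono (Set.Icc_subset_Icc_right (hy.2.le.trans hs.2)))
        ⟨hn, by rw [hHt0]; norm_num⟩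
      have := hmin ⟨⟨hz.1, hz.2.trans (hy.2.le.trans hs.2)⟩, hz0⟩
      linarith [hz.2, hy.2]
    have hd : ∀ y ∈ Set.Icc 0 s, HasDerivAt
        (fun y => Real.sin y * (U y * deriv Ht y - Ht y * deriv U y))
        (Real.cos y * (U y * deriv Ht y - Ht y * deriv U y) + Real.sin y *
          ((deriv U y * deriv Ht y + U y * deriv (deriv Ht) y) -
            (deriv Ht y * deriv U y + Ht y * deriv (deriv U) y))) y := fun y hy => by
      have my := memI y ⟨hy.1, hy.2.trans hsr.le⟩
      exact (Real.hasDerivAt_sin y).mul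
        (((UR y my).1.mul (HR y my).2.1).sub ((HR y my).1.mul (UR y my).2.1))
    have mono : MonotoneOn (fun y => Real.sin y * (U y * deriv Ht y - Ht y * deriv U y))
        (Set.Icc 0 s) := by
      apply monotoneOn_of_deriv_nonneg (convex_Icc 0 s)
        (fun x hx => (hd x hx).continuousAt.continuousWithinAt)
      · intro y hy
        rw [interior_Icc] at hy
        exact (hd y ⟨hy.1.le, hy.2.le⟩).differentiableAt.differentiableWithinAt
      intro y hy
      rw [interior_Icc] at hy
      have hy' : y ∈ Set.Ioc 0 r := ⟨hy.1, (hy.2.trans hsr).le⟩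
      rw [(hd y ⟨hy.1.le, hy.2.le⟩).deriv]
      have e : (Real.cos y * (U y * deriv Ht y - Ht y * deriv U y) + Real.sin y *
          ((deriv U y * deriv Ht y + U y * deriv (deriv Ht) y) -
            (deriv Ht y * deriv U y + Ht y * deriv (deriv U) y))) =
          Real.sin y * Ht y * (f (U y) - U y * deriv f (U y)) := by
        linear_combination U y * ode2 y hy' - Ht y * ode1 y hy'
      rw [e]
      exact mul_nonneg (mul_nonneg (spos y hy').le (Hp1 y ⟨hy.1.le, hy.2⟩).le)
        (sub_nonneg.2 (hH _ (Upos y ⟨hy.1.le, hy.2.trans hsr⟩)).2)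
    have hq : ∀ y ∈ Set.Icc 0 s, HasDerivAt (fun y => Ht y / U y)
        ((deriv Ht y * U y - Ht y * deriv U y) / U y ^ 2) y := fun y hy => by
      have my := memI y ⟨hy.1, hy.2.trans hsr.le⟩
      exact (HR y my).1.div (UR y my).1 (Upos y ⟨hy.1, lt_of_le_of_lt hy.2 hsr⟩).ne'
    have mono2 : MonotoneOn (fun y => Ht y / U y) (Set.Icc 0 s) := by
      apply monotoneOn_of_deriv_nonneg (convex_Icc 0 s)
        (fun x hx => (hq x hx).continuousAt.continuousWithinAt)
      · intro y hy
        rw [interior_Icc] at hy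
        exact (hq y ⟨hy.1.le, hy.2.le⟩).differentiableAt.differentiableWithinAt
      intro y hy
      rw [interior_Icc] at hy
      rw [(hq y ⟨hy.1.le, hy.2.le⟩).deriv]
      have h := mono ⟨le_rfl, hs1.le⟩ ⟨hy.1.le, hy.2.le⟩ hy.1.le
      simp only [Real.sin_zero, zero_mul] at h
      have h2 := nonneg_of_mul_nonneg_right h (spos y ⟨hy.1, (hy.2.trans hsr).le⟩)
      apply div_nonneg _ (sq_nonneg _)
      linarith
    have h := mono2 ⟨le_rfl, hs1.le⟩ ⟨hs1.le, le_rfl⟩ hs1.le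
    simp only [hs0, hHt0, hU0, zero_div] at h
    have : 0 < 1 / t := by positivity
    linarith
  -- the Wronskian
  have Gd : ∀ x ∈ Set.Icc 0 r, HasDerivAt
      (fun y => -(Ht y * (Real.cos y * deriv U y + Real.sin y * f (U y)))
        - Real.sin y * (deriv U y * deriv Ht y))
      (-(deriv Ht x * (Real.cos x * deriv U x + Real.sin x * f (U x)) + Ht x *
        ((-Real.sin x * deriv U x + Real.cos x * deriv (deriv U) x) +
          (Real.cos x * f (U x) + Real.sin x * (deriv f (U x) * deriv U x))))
        - (Real.cos x * (deriv U x * deriv Ht x) + Real.sin x *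
          (deriv (deriv U) x * deriv Ht x + deriv U x * deriv (deriv Ht) x))) x := by
    intro x hx
    have mx := memI x hx
    exact (((HR x mx).1.mul (((Real.hasDerivAt_cos x).mul (UR x mx).2.1).add
      ((Real.hasDerivAt_sin x).mul (fd x hx)))).neg).sub
      ((Real.hasDerivAt_sin x).mul ((UR x mx).2.1.mul (HR x mx).2.1))
  have Ganti : StrictAntiOn (fun y => -(Ht y * (Real.cos y * deriv U y + Real.sin y * f (U y)))
        - Real.sin y * (deriv U y * deriv Ht y)) (Set.Icc 0 r) := by
    apply strictAntiOn_of_deriv_neg (convex_Icc 0 r)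
      (fun x hx => (Gd x hx).continuousAt.continuousWithinAt)
    intro x hx
    rw [interior_Icc] at hx
    have hx' : x ∈ Set.Ioc 0 r := ⟨hx.1, hx.2.le⟩
    rw [(Gd x ⟨hx.1.le, hx.2.le⟩).deriv]
    have sp := spos x hx'
    have neg := mul_neg_of_pos_of_neg (Hpos x ⟨hx.1.le, hx.2⟩) (U'neg x hx')
    refine neg_of_mul_neg_right (a := Real.sin x) ?_ sp.le
    refine lt_of_eq_of_lt ?_ neg
    linear_combination (-Real.sin x * deriv Ht x - Ht x * Real.cos x) * ode1 x hx'
      - Real.sin x * deriv U x * ode2 x hx' + Ht x * deriv U x * Real.sin_sq_add_cos_sq x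
  have Wneg : ∀ x ∈ Set.Icc 0 r, Ht x * deriv (deriv U) x - deriv U x * deriv Ht x < 0 := by
    intro x hx
    rcases eq_or_lt_of_le hx.1 with h0 | h0
    · subst h0
      have h := aux_zero (deriv U) (fun y => f (U y)) _ (UR 0 m0).2.1 U'0 (UR 0 m0).2.2 rfl
        (fd 0 hx).continuousAt
        (fun x hx => hUode x ⟨by linarith [hx.1], hx.2⟩ hx.1.ne')
      simp only [hU0] at h
      have := (hH t ht).1
      rw [hHt0, U'0]
      linarith
    · have h := Ganti ⟨le_rfl, hr0.le⟩ hx h0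
      simp only [Real.sin_zero, zero_mul, U'0, mul_zero, add_zero, neg_zero, sub_zero] at h
      have hx' : x ∈ Set.Ioc 0 r := ⟨h0, hx.2⟩
      refine neg_of_mul_neg_right (a := Real.sin x) ?_ (spos x hx').le
      refine lt_of_eq_of_lt ?_ h
      linear_combination Ht x * ode1 x hx'
  intro x hx
  rcases le_total 0 x with h0 | h0
  · exact (Wneg x ⟨h0, hx.2⟩).ne
  · have hm : -x ∈ Set.Icc 0 r := ⟨by linarith, by linarith [hx.1]⟩
    have mx : x ∈ Set.Ioo (-Real.pi) Real.pi := ⟨by linarith [hx.1], by linarith⟩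
    have h := Wneg (-x) hm
    rw [hHte x mx, Upp x mx, Up x mx, Hp x mx] at h
    apply ne_of_lt
    linarith
end

section
/- Let λ > 0 and let U: (−π,π) → ℝ be the even C² solution of U'' + (cot ρ)·U' + λ·U = 0 (away from ρ = 0) with U(0) = 1, and let R_λ ∈ (0,π) be the smallest positive zero of U. Then there exists ε > 0 with R_λ + ε < π such that U''(ρ)·U(ρ) − U'(ρ)² does not vanish for any ρ ∈ (0, R_λ + ε); in fact U''(ρ)·U(ρ) − U'(ρ)² < 0 on this interval. -/
open Real Set

theorem stmt9 (lam : ℝ) (hlam : 0 < lam) (U : ℝ → ℝ)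
    (hU : IsEvenSol (fun x => lam * x) U) (hU0 : U 0 = 1)
    (R : ℝ) (hR : R ∈ Set.Ioo 0 Real.pi) (hUR : U R = 0)
    (hRmin : ∀ ρ ∈ Set.Ioo 0 R, U ρ ≠ 0) :
    ∃ ε > (0:ℝ), R + ε < Real.pi ∧
      (∀ ρ ∈ Set.Ioo 0 (R + ε), deriv (deriv U) ρ * U ρ - (deriv U ρ) ^ 2 ≠ 0) ∧
      (∀ ρ ∈ Set.Ioo 0 (R + ε), deriv (deriv U) ρ * U ρ - (deriv U ρ) ^ 2 < 0) := by
  obtain ⟨heven, hC, hode⟩ := hU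
  obtain ⟨hR0, hRpi⟩ := hR
  have hpi := Real.pi_pos
  have hC2 : ContDiffOn ℝ (1 + 1) U (Set.Ioo (-Real.pi) Real.pi) := by
    have : (1 + 1 : WithTop ℕ∞) = 2 := by norm_num
    rw [this]; exact hC
  rw [contDiffOn_succ_iff_deriv_of_isOpen isOpen_Ioo] at hC2
  obtain ⟨hd0, -, hC1⟩ := hC2
  have hd1 := hC1.differentiableOn one_ne_zero
  have hU1 : ∀ x ∈ Set.Ioo (-Real.pi) Real.pi, HasDerivAt U (deriv U x) x := fun x hx =>
    (hd0.differentiableAt (isOpen_Ioo.mem_nhds hx)).hasDerivAt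
  have hU2 : ∀ x ∈ Set.Ioo (-Real.pi) Real.pi, HasDerivAt (deriv U) (deriv (deriv U) x) x :=
    fun x hx => (hd1.differentiableAt (isOpen_Ioo.mem_nhds hx)).hasDerivAt
  have h0mem : (0:ℝ) ∈ Set.Ioo (-Real.pi) Real.pi := ⟨by linarith, hpi⟩
  have hmem : ∀ x, 0 ≤ x → x < Real.pi → x ∈ Set.Ioo (-Real.pi) Real.pi :=
    fun x h1 h2 => ⟨by linarith, h2⟩
  -- the derivative at zero vanishes
  have hU'0 : deriv U 0 = 0 := by
    have h1 : (fun x => U (-x)) =ᶠ[nhds 0] U := by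
      filter_upwards [isOpen_Ioo.mem_nhds h0mem] with x hx using heven x hx
    have h2 := h1.deriv_eq
    rw [deriv_comp_neg] at h2
    simp at h2
    linarith
  have hsin : ∀ x, 0 < x → x < Real.pi → 0 < Real.sin x := fun x h1 h2 =>
    Real.sin_pos_of_pos_of_lt_pi h1 h2
  have hode' : ∀ x, 0 < x → x < Real.pi →
      Real.sin x * deriv (deriv U) x = - Real.cos x * deriv U x - lam * Real.sin x * U x := by
    intro x h1 h2
    have h := hode x (hmem x h1.le h2) h1.ne'
    have hs := (hsin x h1 h2).ne'
    field_simp at h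
    linarith
  have hcont : ContinuousOn U (Set.Ioo (-Real.pi) Real.pi) := hC.continuousOn
  have hpos : ∀ x, 0 < x → x < R → 0 < U x := by
    intro x h1 h2
    by_contra! h
    have hc : ContinuousOn U (Set.Icc 0 x) :=
      hcont.mono fun y hy => hmem y hy.1 (by linarith [hy.2])
    obtain ⟨y, hy, hy0⟩ := intermediate_value_Icc' h1.le hc
      (show (0:ℝ) ∈ Set.Icc (U x) (U 0) from ⟨h, by rw [hU0]; norm_num⟩)
    have : y ≠ 0 := by rintro rfl; rw [hU0] at hy0; norm_num at hy0
    exact hRmin y ⟨lt_of_le_of_ne hy.1 this.symm, by linarith [hy.2]⟩ hy0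
  -- sin * U' is decreasing
  have hHd : ∀ x ∈ Set.Ioo (-Real.pi) Real.pi, HasDerivAt (fun x => Real.sin x * deriv U x)
      (Real.cos x * deriv U x + Real.sin x * deriv (deriv U) x) x := fun x hx =>
    (Real.hasDerivAt_sin x).mul (hU2 x hx)
  have hHanti : StrictAntiOn (fun x => Real.sin x * deriv U x) (Set.Icc 0 R) := by
    apply strictAntiOn_of_deriv_neg (convex_Icc 0 R)
    · intro x hx
      exact (hHd x (hmem x hx.1 (by linarith [hx.2]))).continuousAt.continuousWithinAt
    · intro x hx
      rw [interior_Icc] at hx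
      have hxp : x < Real.pi := by linarith [hx.2]
      rw [(hHd x (hmem x hx.1.le hxp)).deriv, hode' x hx.1 hxp]
      have := mul_pos (mul_pos hlam (hsin x hx.1 hxp)) (hpos x hx.1 hx.2)
      linarith
  have hneg : ∀ x, 0 < x → x ≤ R → deriv U x < 0 := by
    intro x h1 h2
    have h := hHanti (show (0:ℝ) ∈ Set.Icc 0 R from ⟨le_rfl, hR0.le⟩)
      (show x ∈ Set.Icc 0 R from ⟨h1.le, h2⟩) h1
    simp only [Real.sin_zero, zero_mul] at h
    exact (pos_iff_neg_of_mul_neg h).1 (hsin x h1 (by linarith))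
  let G : ℝ → ℝ := fun x => - (Real.cos x * (deriv U x * U x))
    - lam * (Real.sin x * (U x * U x)) - Real.sin x * (deriv U x * deriv U x)
  have hGd : ∀ x ∈ Set.Ioo (-Real.pi) Real.pi, HasDerivAt G
      (- (-Real.sin x * (deriv U x * U x) +
          Real.cos x * (deriv (deriv U) x * U x + deriv U x * deriv U x))
        - lam * (Real.cos x * (U x * U x) + Real.sin x * (deriv U x * U x + U x * deriv U x))
        - (Real.cos x * (deriv U x * deriv U x) +
          Real.sin x * (deriv (deriv U) x * deriv U x + deriv U x * deriv (deriv U) x))) x := by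
    intro x hx
    have a := hU1 x hx
    have b := hU2 x hx
    have s := Real.hasDerivAt_sin x
    have c := Real.hasDerivAt_cos x
    exact (((c.mul (b.mul a)).neg).sub ((s.mul (a.mul a)).const_mul lam)).sub
      (s.mul (b.mul b))
  have hGF : ∀ x, 0 < x → x < Real.pi →
      G x = Real.sin x * (deriv (deriv U) x * U x - (deriv U x) ^ 2) := by
    intro x h1 h2
    have h := hode' x h1 h2
    simp only [G]
    linear_combination (-U x) * h
  have hGanti : StrictAntiOn G (Set.Icc 0 R) := by
    apply strictAntiOn_of_deriv_neg (convex_Icc 0 R)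
    · intro x hx
      exact (hGd x (hmem x hx.1 (by linarith [hx.2]))).continuousAt.continuousWithinAt
    · intro x hx
      rw [interior_Icc] at hx
      have hxp : x < Real.pi := by linarith [hx.2]
      rw [(hGd x (hmem x hx.1.le hxp)).deriv]
      have h := hode' x hx.1 hxp
      have hs := hsin x hx.1 hxp
      have hm := mul_neg_of_pos_of_neg (hpos x hx.1 hx.2) (hneg x hx.1 hx.2.le)
      refine (pos_iff_neg_of_mul_neg (a := Real.sin x) ?_).1 hs
      refine lt_of_eq_of_lt ?_ hm
      have hcs := Real.sin_sq_add_cos_sq x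
      linear_combination (-Real.cos x * U x - 2 * Real.sin x * deriv U x) * h
        + (U x * deriv U x) * hcs
  have hG0 : G 0 = 0 := by simp [G, hU'0]
  have hGneg : ∀ x, 0 < x → x ≤ R → G x < 0 := by
    intro x h1 h2
    have h := hGanti (show (0:ℝ) ∈ Set.Icc 0 R from ⟨le_rfl, hR0.le⟩)
      (show x ∈ Set.Icc 0 R from ⟨h1.le, h2⟩) h1
    rwa [hG0] at h
  have hev : ∀ᶠ x in nhds R, G x < 0 :=
    (hGd R (hmem R hR0.le hRpi)).continuousAt.eventually_lt continuousAt_const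
      (hGneg R hR0 le_rfl)
  obtain ⟨δ, hδ, hδG⟩ := Metric.eventually_nhds_iff.1 hev
  have key : ∀ ρ ∈ Set.Ioo 0 (R + min δ ((Real.pi - R) / 2)),
      deriv (deriv U) ρ * U ρ - (deriv U ρ) ^ 2 < 0 := by
    intro x hx
    have m1 := min_le_left δ ((Real.pi - R) / 2)
    have m2 := min_le_right δ ((Real.pi - R) / 2)
    have hxp : x < Real.pi := by linarith [hx.2]
    have hg : G x < 0 := by
      rcases le_or_gt x R with h | h
      · exact hGneg x hx.1 h
      · apply hδG
        rw [Real.dist_eq, abs_of_pos (by linarith)]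
        linarith [hx.2]
    rw [hGF x hx.1 hxp] at hg
    exact (pos_iff_neg_of_mul_neg hg).1 (hsin x hx.1 hxp)
  refine ⟨min δ ((Real.pi - R) / 2), lt_min hδ (by linarith), ?_, fun ρ h => (key ρ h).ne, key⟩
  have m2 := min_le_right δ ((Real.pi - R) / 2)
  linarith
end
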